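/- arXiv:1410.7910 — 2 statements merged into one kernel-verified Lean document; each statement's English description precedes it below -/
import Mathlib

section
/- The expectation of 2 raised to the total number of loops and parallel-edge pairs in the random cubic configuration-model multigraph converges to e²: as N → ∞ through even values of N, the average over ω ∈ Ω_N of 2^{X_{N,1}(ω) + X_{N,2}(ω)} tends to e². -/
open Filter Real Topology

/-- `Omega N`: the perfect matchings of the `3N` half-edges, i.e. fixed-point-free
involutions of `Fin (3N)`. -/
def Omega (N : ℕ) : Type := {ω : Equiv.Perm (Fin (3 * N)) // ∀ a, ω (ω a) = a ∧ ω a ≠ a}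

instance (N : ℕ) : Fintype (Omega N) := by unfold Omega; exact Subtype.fintype _

/-- The block (vertex) containing a half-edge: `B_v = {3v, 3v+1, 3v+2}`. -/
def blk {N : ℕ} (a : Fin (3 * N)) : Fin N := ⟨a.val / 3, by have := a.isLt; omega⟩

/-- The multiplicity of the pair of blocks `{u, v}` in the multigraph `Γ(ω)`:
for `u ≠ v` the number of half-edges in `B_u` matched into `B_v`; for `u = v`
the number of matched pairs contained in `B_u` (loops at `u`). -/
noncomputable def mult {N : ℕ} (ω : Omega N) (u v : Fin N) : ℕ :=
  if u = v then Nat.card {a : Fin (3 * N) // blk a = u ∧ blk (ω.val a) = u} / 2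
  else Nat.card {a : Fin (3 * N) // blk a = u ∧ blk (ω.val a) = v}

/-- `X_{N,1}`: the number of matched pairs contained in a single block (loops).
Each such pair `{a, ω a}` contributes its two half-edges, whence the division by 2. -/
noncomputable def X1 {N : ℕ} (ω : Omega N) : ℕ :=
  Nat.card {a : Fin (3 * N) // blk (ω.val a) = blk a} / 2

/-- `X_{N,2}`: the number of unordered pairs of distinct matched pairs joining the same
two distinct blocks: over each unordered pair of distinct blocks of multiplicity `m`
there are `C(m, 2)` such pairs of parallel edges. -/
noncomputable def X2 {N : ℕ} (ω : Omega N) : ℕ :=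
  ∑ u : Fin N, ∑ v : Fin N, if u < v then Nat.choose (mult ω u v) 2 else 0

/-- `1/((M-1)(M-3)...(M-2k+1))`, `M = 3N`. -/
noncomputable def pp (N k : ℕ) : ℝ := ∏ i ∈ Finset.range k, (1 / ((3 * N - 1 - 2 * i : ℕ) : ℝ))

/-- vertex recursion -/
noncomputable def cc (p : ℕ → ℝ) : ℕ → ℕ → ℝ
  | 0, k => p k
  | 1, k => p k + 3 * p (k + 1)
  | n + 2, k => cc p (n + 1) k + 3 * cc p (n + 1) (k + 1)
      + (n + 1) * (18 * cc p n (k + 2) + 24 * cc p n (k + 3))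

/-- coefficients of the falling factorial expansion of `cc`. -/
noncomputable def qq (p : ℕ → ℝ) : ℕ → ℕ → ℝ
  | 0, k => p k
  | 1, k => 3 * p (k + 1)
  | m + 2, k => (3 * qq p (m + 1) (k + 1) + 18 * qq p m (k + 2) + 24 * qq p m (k + 3)) / (m + 2)

theorem descFactorial_step (n m : ℕ) :
    ((n + 1).descFactorial (m + 1) : ℝ)
      = n.descFactorial (m + 1) + (m + 1) * n.descFactorial m := by
  rw [Nat.succ_descFactorial_succ, Nat.descFactorial_succ]
  rcases le_or_gt m n with h | h
  · push_cast [Nat.cast_sub h]; ring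
  · rw [Nat.descFactorial_eq_zero_iff_lt.mpr h]; simp

theorem cc_eq (p : ℕ → ℝ) : ∀ n k R, n < R →
    cc p n k = ∑ m ∈ Finset.range R, (n.descFactorial m : ℝ) * qq p m k
  | 0, k, R, h => by
    obtain ⟨R, rfl⟩ : ∃ r, R = r + 1 := ⟨R - 1, by omega⟩
    rw [Finset.sum_range_succ']
    simp [cc, qq]
  | 1, k, R, h => by
    obtain ⟨R, rfl⟩ : ∃ r, R = r + 2 := ⟨R - 2, by omega⟩
    rw [Finset.sum_range_succ', Finset.sum_range_succ']
    rw [Finset.sum_eq_zero]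
    · simp [cc, qq]; ring
    · intro i _
      rw [Nat.descFactorial_eq_zero_iff_lt.mpr (by omega)]; simp
  | n + 2, k, R, h => by
    obtain ⟨R, rfl⟩ : ∃ r, R = r + 2 := ⟨R - 2, by omega⟩
    have e1 := cc_eq p (n + 1) k (R + 2) (by omega)
    have e2 := cc_eq p (n + 1) (k + 1) (R + 1) (by omega)
    have e3 := cc_eq p n (k + 2) R (by omega)
    have e4 := cc_eq p n (k + 3) R (by omega)
    have s1 : ∑ m ∈ Finset.range (R + 2), ((n + 2).descFactorial m : ℝ) * qq p m k
        = ∑ m ∈ Finset.range (R + 2), ((n + 1).descFactorial m : ℝ) * qq p m k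
          + ∑ m ∈ Finset.range (R + 1),
            (m + 1) * ((n + 1).descFactorial m : ℝ) * qq p (m + 1) k := by
      rw [Finset.sum_range_succ' _ (R + 1), Finset.sum_range_succ' _ (R + 1)]
      rw [add_right_comm, ← Finset.sum_add_distrib]
      congr 1
      apply Finset.sum_congr rfl
      intro m _
      rw [descFactorial_step (n + 1) m]; push_cast; ring
    rw [s1, ← e1, Finset.sum_range_succ' _ R, cc]
    rw [Finset.sum_range_succ' _ R] at e2
    have s2 : ∑ m ∈ Finset.range R, (((m + 1 : ℕ) : ℝ) + 1) * ((n + 1).descFactorial (m + 1) : ℝ)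
          * qq p (m + 1 + 1) k
        = 3 * ∑ m ∈ Finset.range R, ((n + 1).descFactorial (m + 1) : ℝ) * qq p (m + 1) (k + 1)
        + (n + 1) * (18 * ∑ m ∈ Finset.range R, (n.descFactorial m : ℝ) * qq p m (k + 2)
          + 24 * ∑ m ∈ Finset.range R, (n.descFactorial m : ℝ) * qq p m (k + 3)) := by
      simp only [Finset.mul_sum, ← Finset.sum_add_distrib]
      apply Finset.sum_congr rfl
      intro m _
      rw [Nat.succ_descFactorial_succ, qq]
      have : (m : ℝ) + 2 ≠ 0 := by positivity
      push_cast
      field_simp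
      ring
    rw [s2, e2, e3, e4]
    simp [qq]
    ring

theorem pp_nonneg (N k : ℕ) : 0 ≤ pp N k := by
  unfold pp; positivity

theorem pp_succ_le (N k : ℕ) : pp N (k + 1) ≤ pp N k := by
  unfold pp
  rw [Finset.prod_range_succ]
  have h : (1 / ((3 * N - 1 - 2 * k : ℕ) : ℝ)) ≤ 1 := by
    rcases Nat.eq_zero_or_pos (3 * N - 1 - 2 * k) with h | h
    · rw [h]; simp
    · rw [div_le_one (by exact_mod_cast h)]; exact_mod_cast h
  exact mul_le_of_le_one_right (pp_nonneg N k) h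

theorem desc_mul_pp_le (N m : ℕ) : (N.descFactorial m : ℝ) * pp N m ≤ 1 := by
  induction m with
  | zero => simp [pp]
  | succ m ih =>
    unfold pp at *
    rw [Finset.prod_range_succ, Nat.descFactorial_succ]
    have h : ((N - m : ℕ) : ℝ) * (1 / ((3 * N - 1 - 2 * m : ℕ) : ℝ)) ≤ 1 := by
      rcases Nat.eq_zero_or_pos (N - m) with h | h
      · rw [h]; simp
      · have h2 : 0 < 3 * N - 1 - 2 * m := by omega
        rw [mul_one_div, div_le_one (by exact_mod_cast h2)]
        exact_mod_cast (by omega : N - m ≤ 3 * N - 1 - 2 * m)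
    have h0 : 0 ≤ ((N - m : ℕ) : ℝ) * (1 / ((3 * N - 1 - 2 * m : ℕ) : ℝ)) := by positivity
    push_cast
    calc _ = (((N - m : ℕ) : ℝ) * (1 / ((3 * N - 1 - 2 * m : ℕ) : ℝ))) *
        ((N.descFactorial m : ℝ) * ∏ i ∈ Finset.range m, (1 / ((3 * N - 1 - 2 * i : ℕ) : ℝ))) := by
          ring
      _ ≤ 1 := mul_le_one₀ h (mul_nonneg (by positivity) (pp_nonneg N m)) ih

/-- Coefficients of `exp (A z + B z^2)`. -/
noncomputable def gg (A B : ℝ) : ℕ → ℝ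
  | 0 => 1
  | 1 => A
  | m + 2 => (A * gg A B (m + 1) + 2 * B * gg A B m) / (m + 2)

theorem hasSum_gg (A B : ℝ) : HasSum (gg A B) (Real.exp (A + B)) := by
  set a : ℕ → ℝ := fun i => A ^ i / i.factorial with ha
  set b : ℕ → ℝ := fun i => if Even i then B ^ (i / 2) / (i / 2).factorial else 0 with hb
  have hA : HasSum a (Real.exp A) := by
    rw [Real.exp_eq_exp_ℝ]; exact NormedSpace.expSeries_div_hasSum_exp A
  have hinj : Function.Injective (fun i : ℕ => 2 * i) := fun x y h => by
    have : 2 * x = 2 * y := h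
    omega
  have hb0 : ∀ i ∉ Set.range (fun i : ℕ => 2 * i), b i = 0 := by
    intro i hi
    simp only [hb]
    rw [if_neg]
    rintro ⟨r, hr⟩
    exact hi ⟨r, by simp; omega⟩
  have hB : HasSum b (Real.exp B) := by
    rw [← hinj.hasSum_iff hb0]
    have : b ∘ (fun i => 2 * i) = fun i => B ^ i / i.factorial := by
      ext i; simp [hb]
    rw [this, Real.exp_eq_exp_ℝ]; exact NormedSpace.expSeries_div_hasSum_exp B
  have hnA : Summable (fun i => ‖a i‖) := hA.summable.norm
  have hnB : Summable (fun i => ‖b i‖) := hB.summable.norm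
  have key : ∀ n, gg A B n = ∑ kl ∈ Finset.HasAntidiagonal.antidiagonal n, a kl.1 * b kl.2 := by
    set F : PowerSeries ℝ := PowerSeries.mk a with hF
    set G : PowerSeries ℝ := PowerSeries.mk b with hG
    have dF : PowerSeries.derivative ℝ F = PowerSeries.C A * F := by
      ext n
      rw [PowerSeries.coeff_derivative, PowerSeries.coeff_C_mul]
      simp only [hF, PowerSeries.coeff_mk, ha, Nat.factorial_succ]
      push_cast
      field_simp
      ring
    have dG : PowerSeries.derivative ℝ G = PowerSeries.C (2 * B) * (PowerSeries.X * G) := by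
      ext n
      rw [PowerSeries.coeff_derivative, PowerSeries.coeff_C_mul]
      rcases n with _ | n
      · simp [hG, hb]
      · rw [PowerSeries.coeff_succ_X_mul]
        simp only [hG, PowerSeries.coeff_mk, hb]
        rcases Nat.even_or_odd' n with ⟨r, rfl | rfl⟩
        · rw [if_pos (by use r + 1; ring), if_pos (by use r; ring)]
          have : (2 * r + 1 + 1) / 2 = r + 1 := by omega
          have h2 : 2 * r / 2 = r := by omega
          rw [this, h2, Nat.factorial_succ]
          push_cast
          field_simp
          ring
        · rw [if_neg (by rw [Nat.not_even_iff]; omega), if_neg (by rw [Nat.not_even_iff]; omega)]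
          simp
    have dFG : PowerSeries.derivative ℝ (F * G)
        = PowerSeries.C A * (F * G) + PowerSeries.C (2 * B) * (PowerSeries.X * (F * G)) := by
      rw [Derivation.leibniz, dF, dG]; simp only [smul_eq_mul]; ring
    have hco : ∀ n, PowerSeries.coeff n (F * G)
        = ∑ kl ∈ Finset.HasAntidiagonal.antidiagonal n, a kl.1 * b kl.2 := by
      intro n; rw [PowerSeries.coeff_mul]; simp [hF, hG]
    have rec0 : PowerSeries.coeff 0 (F * G) = 1 := by rw [hco]; simp [ha, hb]
    have rec1 : PowerSeries.coeff 1 (F * G) = A := by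
      have := congrArg (PowerSeries.coeff 0) dFG
      rw [PowerSeries.coeff_derivative, map_add,
        PowerSeries.coeff_C_mul, PowerSeries.coeff_C_mul, rec0,
        PowerSeries.coeff_zero_X_mul] at this
      simpa using this
    have rec2 : ∀ m, PowerSeries.coeff (m + 2) (F * G)
        = (A * PowerSeries.coeff (m + 1) (F * G) + 2 * B * PowerSeries.coeff m (F * G)) / (m + 2) := by
      intro m
      have := congrArg (PowerSeries.coeff (m + 1)) dFG
      rw [PowerSeries.coeff_derivative, map_add,
        PowerSeries.coeff_C_mul, PowerSeries.coeff_C_mul,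
        PowerSeries.coeff_succ_X_mul] at this
      have h0 : (m : ℝ) + 2 ≠ 0 := by positivity
      rw [eq_div_iff h0, ← this]
      push_cast; ring
    intro n
    rw [← hco]
    induction n using Nat.twoStepInduction with
    | zero => rw [rec0, gg]
    | one => rw [rec1, gg]
    | more m h1 h2 => rw [rec2, gg, h1, h2]
  have hsum : Summable (gg A B) := by
    have := (summable_norm_sum_mul_antidiagonal_of_summable_norm hnA hnB).of_norm
    exact this.congr (fun n => (key n).symm)
  have htsum := tsum_mul_tsum_eq_tsum_sum_antidiagonal_of_summable_norm hnA hnB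
  rw [hA.tsum_eq, hB.tsum_eq, ← Real.exp_add] at htsum
  rw [htsum]
  simp_rw [← key]
  exact hsum.hasSum

theorem qq_nonneg (N : ℕ) (m : ℕ) : ∀ k, 0 ≤ qq (pp N) m k := by
  induction m using Nat.twoStepInduction with
  | zero => intro k; exact pp_nonneg N k
  | one => intro k; rw [qq]; have := pp_nonneg N (k + 1); positivity
  | more m h1 h2 =>
    intro k
    rw [qq]
    have := h2 (k + 1); have := h1 (k + 2); have := h1 (k + 3)
    positivity

theorem qq_le (N : ℕ) (m : ℕ) : ∀ k, qq (pp N) m k ≤ gg 3 21 m * pp N (m + k) := by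
  induction m using Nat.twoStepInduction with
  | zero => intro k; simp [qq, gg]
  | one => intro k; simp [qq, gg, add_comm]
  | more m h1 h2 =>
    intro k
    have g : 0 ≤ gg 3 21 m := by
      clear h1 h2
      induction m using Nat.twoStepInduction with
      | zero => simp [gg]
      | one => simp [gg]
      | more m h1 h2 => rw [gg]; positivity
    rw [qq, gg, div_mul_eq_mul_div]
    apply div_le_div_of_nonneg_right _ (by positivity)
    have a1 := h2 (k + 1); have a2 := h1 (k + 2); have a3 := h1 (k + 3)
    have e1 : m + 1 + (k + 1) = m + 2 + k := by ring
    have e2 : m + (k + 2) = m + 2 + k := by ring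
    have e3 : m + (k + 3) = (m + 2 + k) + 1 := by ring
    rw [e1] at a1; rw [e2] at a2; rw [e3] at a3
    have a4 := a3.trans (mul_le_mul_of_nonneg_left (pp_succ_le N (m + 2 + k)) g)
    linarith

theorem tendsto_pp (k : ℕ) :
    Tendsto (fun N : ℕ => (N : ℝ) ^ k * pp N k) atTop (𝓝 ((1 / 3) ^ k)) := by
  induction k with
  | zero => simp [pp]
  | succ k ih =>
    have h : Tendsto (fun N : ℕ => (N : ℝ) * (1 / ((3 * N - 1 - 2 * k : ℕ) : ℝ))) atTop
        (𝓝 (1 / 3)) := by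
      have h1 : Tendsto (fun N : ℕ => 1 / (3 - (1 + 2 * (k : ℝ)) / (N : ℝ))) atTop
          (𝓝 (1 / (3 - 0))) := by
        apply Tendsto.div tendsto_const_nhds _ (by norm_num)
        exact tendsto_const_nhds.sub (tendsto_const_div_atTop_nhds_zero_nat _)
      rw [sub_zero] at h1
      refine h1.congr' ?_
      filter_upwards [eventually_ge_atTop (2 * k + 2)] with N hN
      have hc : ((3 * N - 1 - 2 * k : ℕ) : ℝ) = 3 * N - 1 - 2 * k := by
        rw [Nat.cast_sub (by omega), Nat.cast_sub (by omega)]; push_cast; ring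
      have hN' : (2 * k + 2 : ℝ) ≤ N := by exact_mod_cast hN
      have hk : (0 : ℝ) ≤ k := by positivity
      have hpos : (0 : ℝ) < N := by linarith
      have hpos2 : (0 : ℝ) < 3 * N - 1 - 2 * k := by linarith
      rw [hc, mul_one_div]
      have : 3 - (1 + 2 * (k : ℝ)) / (N : ℝ) = (3 * N - 1 - 2 * k) / N := by
        field_simp; ring
      rw [this, one_div_div]
    have := ih.mul h
    rw [← pow_succ] at this
    refine this.congr ?_
    intro N
    unfold pp
    rw [Finset.prod_range_succ]
    ring

theorem tendsto_qq (m : ℕ) : ∀ k,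
    Tendsto (fun N : ℕ => (N : ℝ) ^ (m + k) * qq (pp N) m k) atTop
      (𝓝 (gg 1 1 m * (1 / 3) ^ k)) := by
  induction m using Nat.twoStepInduction with
  | zero => intro k; simpa [qq, gg] using tendsto_pp k
  | one =>
    intro k
    have := (tendsto_pp (k + 1)).const_mul 3
    refine (this.congr ?_).trans_eq ?_
    · intro N; rw [qq]; ring
    · rw [gg]; congr 1; ring
  | more m h1 h2 =>
    intro k
    have a1 := (h2 (k + 1)).const_mul 3
    have a2 := (h1 (k + 2)).const_mul 18
    have a3 := ((h1 (k + 3)).const_mul 24).mul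
      (tendsto_const_div_atTop_nhds_zero_nat (1 : ℝ))
    have := ((a1.add a2).add a3).div_const ((m : ℝ) + 2)
    refine (this.congr' ?_).trans_eq ?_
    · filter_upwards [eventually_gt_atTop 0] with N hN
      have : (N : ℝ) ≠ 0 := by positivity
      rw [qq]
      field_simp
      ring
    · congr 1; rw [gg]; ring

theorem tendsto_desc (m : ℕ) :
    Tendsto (fun N : ℕ => (N.descFactorial m : ℝ) / (N : ℝ) ^ m) atTop (𝓝 1) := by
  induction m with
  | zero => simp
  | succ m ih =>
    have h : Tendsto (fun N : ℕ => ((N - m : ℕ) : ℝ) / N) atTop (𝓝 1) := by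
      have h1 : Tendsto (fun N : ℕ => 1 - (m : ℝ) / (N : ℝ)) atTop (𝓝 (1 - 0)) :=
        tendsto_const_nhds.sub (tendsto_const_div_atTop_nhds_zero_nat _)
      rw [sub_zero] at h1
      refine h1.congr' ?_
      filter_upwards [eventually_ge_atTop (m + 1)] with N hN
      have : (N : ℝ) ≠ 0 := by
        have : N ≠ 0 := by omega
        exact_mod_cast this
      rw [Nat.cast_sub (by omega)]
      field_simp
    have := h.mul ih
    rw [mul_one] at this
    refine this.congr ?_
    intro N
    rw [Nat.descFactorial_succ, pow_succ]
    push_cast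
    rw [div_mul_div_comm]
    ring

theorem tendsto_cc : Tendsto (fun N : ℕ => cc (pp N) N 0) atTop (𝓝 (Real.exp 2)) := by
  have h : ∀ N : ℕ, cc (pp N) N 0 = ∑' m, (N.descFactorial m : ℝ) * qq (pp N) m 0 := by
    intro N
    rw [cc_eq (pp N) N 0 (N + 1) (by omega), tsum_eq_sum]
    intro m hm
    rw [Nat.descFactorial_eq_zero_iff_lt.mpr (by simpa using hm)]; simp
  simp_rw [h]
  have e2 : Real.exp 2 = ∑' m, gg 1 1 m := by
    rw [(hasSum_gg 1 1).tsum_eq]; norm_num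
  rw [e2]
  apply tendsto_tsum_of_dominated_convergence (bound := gg 3 21) (hasSum_gg 3 21).summable
  · intro m
    have := (tendsto_desc m).mul (tendsto_qq m 0)
    rw [one_mul, pow_zero, mul_one] at this
    refine this.congr' ?_
    filter_upwards [eventually_gt_atTop 0] with N hN
    have : (N : ℝ) ≠ 0 := by positivity
    rw [add_zero]
    field_simp
  · refine Filter.Eventually.of_forall fun N m => ?_
    rw [Real.norm_of_nonneg (mul_nonneg (by positivity) (qq_nonneg N m 0))]
    have g : 0 ≤ gg 3 21 m := by
      induction m using Nat.twoStepInduction with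
      | zero => simp [gg]
      | one => simp [gg]
      | more m h1 h2 => rw [gg]; positivity
    calc _ ≤ (N.descFactorial m : ℝ) * (gg 3 21 m * pp N (m + 0)) :=
          mul_le_mul_of_nonneg_left (qq_le N m 0) (by positivity)
      _ = gg 3 21 m * ((N.descFactorial m : ℝ) * pp N m) := by rw [add_zero]; ring
      _ ≤ gg 3 21 m * 1 := mul_le_mul_of_nonneg_left (desc_mul_pp_le N m) g
      _ = _ := mul_one _

/-! ### The pointwise expansion -/

/-- Exponent restricted to a set of vertices, for an abstract multiplicity matrix. -/
def XW {N : ℕ} (M : Fin N → Fin N → ℕ) (W : Finset (Fin N)) : ℕ :=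
  ∑ v ∈ W, M v v / 2 + ∑ u ∈ W, ∑ v ∈ W, if u < v then Nat.choose (M u v) 2 else 0

theorem XW_insert {N : ℕ} (M : Fin N → Fin N → ℕ) (W : Finset (Fin N)) (v : Fin N)
    (hv : ∀ u ∈ W, u < v) :
    XW M (insert v W) = XW M W + M v v / 2 + ∑ u ∈ W, Nat.choose (M u v) 2 := by
  have hvW : v ∉ W := fun h => lt_irrefl _ (hv v h)
  unfold XW
  rw [Finset.sum_insert hvW, Finset.sum_insert hvW, Finset.sum_insert hvW]
  have h1 : ∑ w ∈ W, (if v < w then Nat.choose (M v w) 2 else 0) = 0 :=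
    Finset.sum_eq_zero fun w hw => if_neg (hv w hw).asymm
  have h2 : ∑ u ∈ W, ∑ w ∈ insert v W, (if u < w then Nat.choose (M u w) 2 else 0)
      = ∑ u ∈ W, Nat.choose (M u v) 2
        + ∑ u ∈ W, ∑ w ∈ W, (if u < w then Nat.choose (M u w) 2 else 0) := by
    rw [← Finset.sum_add_distrib]
    apply Finset.sum_congr rfl
    intro u hu
    rw [Finset.sum_insert hvW, if_pos (hv u hu)]
  rw [h1, h2, if_neg (lt_irrefl v)]
  ring

theorem XW_erase {N : ℕ} (M : Fin N → Fin N → ℕ) (W : Finset (Fin N)) (u : Fin N)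
    (hu : M u u ≤ 1) (hr : ∀ w ∈ W, M u w ≤ 1) (hc : ∀ w ∈ W, M w u ≤ 1) :
    XW M (W.erase u) = XW M W := by
  unfold XW
  have c0 : ∀ m, m ≤ 1 → Nat.choose m 2 = 0 := fun m hm => Nat.choose_eq_zero_of_lt (by omega)
  congr 1
  · exact Finset.sum_erase _ (by omega)
  · have h2 : ∀ w ∈ W, ∑ z ∈ W.erase u, (if w < z then Nat.choose (M w z) 2 else 0)
        = ∑ z ∈ W, (if w < z then Nat.choose (M w z) 2 else 0) := by
      intro w hw
      apply Finset.sum_erase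
      rw [c0 _ (hc w hw)]; simp
    rw [Finset.sum_congr rfl (fun w hw => h2 w (Finset.mem_of_mem_erase hw))]
    apply Finset.sum_erase
    apply Finset.sum_eq_zero
    intro w hw
    rw [c0 _ (hr w hw)]; simp

theorem XW_identity {N : ℕ} (M : Fin N → Fin N → ℕ) (W : Finset (Fin N)) (v : Fin N)
    (hv : ∀ u ∈ W, u < v) (hs : ∀ u v, M u v = M v u) (h1 : ∀ u v, M u v ≤ 3)
    (h3 : ∀ u v w, v ≠ w → M u v + M u w ≤ 3) :
    (2 : ℝ) ^ XW M (insert v W) = 2 ^ XW M W + ((M v v / 2 : ℕ) : ℝ) * 2 ^ XW M W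
      + ∑ u ∈ W, ((Nat.choose (M u v) 2 : ℝ) + 4 * (Nat.choose (M u v) 3 : ℝ))
        * 2 ^ XW M (W.erase u) := by
  rw [XW_insert M W v hv]
  by_cases hex : ∃ u ∈ W, 2 ≤ M u v
  · obtain ⟨u, hu, hu2⟩ := hex
    have huv : u ≠ v := (hv u hu).ne
    have hother : ∀ w, w ≠ u → M w v ≤ 1 := by
      intro w hw
      have := h3 v w u hw
      rw [hs v w, hs v u] at this
      omega
    have hz2 : ∀ w, w ≠ u → Nat.choose (M w v) 2 = 0 := fun w hw =>
      Nat.choose_eq_zero_of_lt (by have := hother w hw; omega)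
    have hz3 : ∀ w, w ≠ u → Nat.choose (M w v) 3 = 0 := fun w hw =>
      Nat.choose_eq_zero_of_lt (by have := hother w hw; omega)
    have hvv : M v v / 2 = 0 := by have := hother v huv.symm; omega
    have hrow : ∀ w, w ≠ v → M u w ≤ 1 := by
      intro w hw
      have := h3 u w v hw
      omega
    have her : XW M (W.erase u) = XW M W := by
      apply XW_erase
      · exact hrow u huv
      · intro w hw; exact hrow w (hv w hw).ne
      · intro w hw; rw [hs]; exact hrow w (hv w hw).ne
    rw [Finset.sum_eq_single_of_mem u hu (fun w _ hw => hz2 w hw),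
      Finset.sum_eq_single_of_mem u hu (fun w _ hw => by rw [hz2 w hw, hz3 w hw]; simp),
      her, hvv]
    have hle := h1 u v
    rcases (by omega : M u v = 2 ∨ M u v = 3) with h | h <;> rw [h]
    · norm_num [Nat.choose, pow_add]; ring
    · norm_num [Nat.choose, pow_add]; ring
  · push Not at hex
    have hz2 : ∀ w ∈ W, Nat.choose (M w v) 2 = 0 := fun w hw =>
      Nat.choose_eq_zero_of_lt (by have := hex w hw; omega)
    have hz3 : ∀ w ∈ W, Nat.choose (M w v) 3 = 0 := fun w hw =>
      Nat.choose_eq_zero_of_lt (by have := hex w hw; omega)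
    rw [Finset.sum_eq_zero hz2,
      Finset.sum_eq_zero (fun w hw => by rw [hz2 w hw, hz3 w hw]; simp)]
    have hle := h1 v v
    rcases (by omega : M v v / 2 = 0 ∨ M v v / 2 = 1) with h | h <;> rw [h]
    · simp
    · rw [add_zero, pow_succ]; push_cast; ring

/-! ### Half-edges -/

/-- The `i`-th half-edge of block `u`. -/
def hh {N : ℕ} (u : Fin N) (i : Fin 3) : Fin (3 * N) := ⟨3 * u.val + i.val, by omega⟩

theorem blk_hh {N : ℕ} (u : Fin N) (i : Fin 3) : blk (hh u i) = u := by
  apply Fin.ext; simp only [blk, hh]; omega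

theorem hh_bij (N : ℕ) : Function.Bijective (fun p : Fin N × Fin 3 => hh p.1 p.2) := by
  constructor
  · rintro ⟨u, i⟩ ⟨v, j⟩ h
    simp only [hh, Fin.mk.injEq] at h
    ext <;> simp <;> omega
  · intro a
    refine ⟨(blk a, ⟨a.val % 3, Nat.mod_lt _ (by norm_num)⟩), ?_⟩
    apply Fin.ext; simp only [blk, hh]; omega

theorem hh_inj {N : ℕ} {u v : Fin N} {i j : Fin 3} : hh u i = hh v j ↔ u = v ∧ i = j := by
  constructor
  · intro h
    have := (hh_bij N).1 (a₁ := (u, i)) (a₂ := (v, j)) h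
    simpa using this
  · rintro ⟨rfl, rfl⟩; rfl

theorem sum_hh {N : ℕ} (f : Fin (3 * N) → ℕ) : ∑ a, f a = ∑ u : Fin N, ∑ i : Fin 3, f (hh u i) := by
  rw [← Fintype.sum_prod_type' (fun u i => f (hh u i))]
  exact (Fintype.sum_bijective _ (hh_bij N) _ _ (fun p => rfl)).symm

theorem ind_blk {N : ℕ} (a : Fin (3 * N)) (v : Fin N) :
    ∑ j : Fin 3, (if a = hh v j then 1 else 0) = if blk a = v then 1 else 0 := by
  obtain ⟨⟨u, i⟩, rfl⟩ := (hh_bij N).2 a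
  simp only [hh_inj, blk_hh]
  by_cases h : u = v <;> simp [h]

theorem om_symm {N : ℕ} (ω : Omega N) (a b : Fin (3 * N)) : ω.val a = b ↔ ω.val b = a := by
  constructor <;> (rintro rfl; exact (ω.2 _).1)

/-- multiplicity matrix -/
def MM {N : ℕ} (ω : Omega N) (u v : Fin N) : ℕ :=
  ∑ i : Fin 3, ∑ j : Fin 3, if ω.val (hh u i) = hh v j then 1 else 0

theorem MM_eq {N : ℕ} (ω : Omega N) (u v : Fin N) :
    MM ω u v = ∑ i : Fin 3, if blk (ω.val (hh u i)) = v then 1 else 0 := by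
  unfold MM; exact Finset.sum_congr rfl fun i _ => ind_blk _ _

theorem MM_symm {N : ℕ} (ω : Omega N) (u v : Fin N) : MM ω u v = MM ω v u := by
  unfold MM
  rw [Finset.sum_comm]
  refine Finset.sum_congr rfl fun i _ => Finset.sum_congr rfl fun j _ => ?_
  simp only [om_symm ω (hh u j)]

theorem MM_add_le {N : ℕ} (ω : Omega N) (u v w : Fin N) (h : v ≠ w) :
    MM ω u v + MM ω u w ≤ 3 := by
  rw [MM_eq, MM_eq, ← Finset.sum_add_distrib]
  calc _ ≤ ∑ i : Fin 3, 1 := Finset.sum_le_sum fun i _ => by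
        by_cases h1 : blk (ω.val (hh u i)) = v
        · have h2 : blk (ω.val (hh u i)) ≠ w := h1 ▸ h
          rw [if_pos h1, if_neg h2]
        · rw [if_neg h1]; split_ifs <;> simp
    _ = 3 := by simp

theorem MM_le {N : ℕ} (ω : Omega N) (u v : Fin N) : MM ω u v ≤ 3 := by
  rw [MM_eq]
  calc _ ≤ ∑ i : Fin 3, 1 := Finset.sum_le_sum fun i _ => by split_ifs <;> simp
    _ = 3 := by simp

theorem MM_diag {N : ℕ} (ω : Omega N) (v : Fin N) :
    MM ω v v = 2 * ((if ω.val (hh v 0) = hh v 1 then 1 else 0)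
      + (if ω.val (hh v 0) = hh v 2 then 1 else 0)
      + (if ω.val (hh v 1) = hh v 2 then 1 else 0)) := by
  unfold MM
  simp only [Fin.sum_univ_three]
  rw [if_neg (ω.2 (hh v 0)).2, if_neg (ω.2 (hh v 1)).2, if_neg (ω.2 (hh v 2)).2]
  simp only [om_symm ω (hh v 1) (hh v 0), om_symm ω (hh v 2) (hh v 0),
    om_symm ω (hh v 2) (hh v 1)]
  ring

theorem X_eq {N : ℕ} (ω : Omega N) : X1 ω + X2 ω = XW (MM ω) Finset.univ := by
  unfold XW X2
  congr 1
  · unfold X1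
    rw [Nat.card_eq_fintype_card, Fintype.card_subtype, Finset.card_filter, sum_hh]
    simp only [blk_hh, ← MM_eq]
    simp only [MM_diag]
    rw [← Finset.mul_sum]
    simp
  · refine Finset.sum_congr rfl fun u _ => Finset.sum_congr rfl fun v _ => ?_
    split_ifs with h
    · congr 1
      unfold mult
      rw [if_neg h.ne, Nat.card_eq_fintype_card, Fintype.card_subtype, Finset.card_filter, sum_hh]
      simp only [blk_hh]
      rw [Finset.sum_eq_single_of_mem u (Finset.mem_univ u)]
      · simp [MM_eq]
      · intro w _ hw; simp [hw]
    · rfl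

/-! ### Probability of a partial matching -/

/-- Indicator that `a` is matched to `b`. -/
def xx {N : ℕ} (ω : Omega N) (a b : Fin (3 * N)) : ℝ := if ω.val a = b then 1 else 0

/-- Indicator of a list of pairs. -/
def II {N : ℕ} (ω : Omega N) : List (Fin (3 * N) × Fin (3 * N)) → ℝ
  | [] => 1
  | p :: e => xx ω p.1 p.2 * II ω e

/-- The half-edges of a list of pairs. -/
def sup {N : ℕ} : List (Fin (3 * N) × Fin (3 * N)) → List (Fin (3 * N))
  | [] => []
  | p :: e => p.1 :: p.2 :: sup e

theorem sup_length {N : ℕ} (e : List (Fin (3 * N) × Fin (3 * N))) :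
    (sup e).length = 2 * e.length := by
  induction e with
  | nil => rfl
  | cons p e ih => simp [sup, ih]; ring

theorem II_closed {N : ℕ} (ω : Omega N) (e : List (Fin (3 * N) × Fin (3 * N)))
    (h : II ω e ≠ 0) : ∀ b ∈ sup e, ω.val b ∈ sup e := by
  induction e with
  | nil => simp [sup]
  | cons p e ih =>
    rw [II] at h
    have h1 := left_ne_zero_of_mul h
    have h2 := ih (right_ne_zero_of_mul h)
    have h3 : ω.val p.1 = p.2 := by
      by_contra hc; exact h1 (by simp [xx, hc])
    have h4 := (om_symm ω _ _).1 h3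
    intro b hb
    simp only [sup, List.mem_cons] at hb ⊢
    rcases hb with rfl | rfl | hb
    · right; left; exact h3
    · left; exact h4
    · right; right; exact h2 b hb

/-- Conjugation of a matching by a transposition. -/
def conj {N : ℕ} (c d : Fin (3 * N)) (ω : Omega N) : Omega N :=
  ⟨Equiv.swap c d * ω.val * Equiv.swap c d, fun a => by
    refine ⟨by simp [(ω.2 _).1], ?_⟩
    intro h
    have h' : Equiv.swap c d (ω.val (Equiv.swap c d a)) = a := h
    rw [Equiv.swap_apply_eq_iff] at h'
    exact (ω.2 _).2 h'⟩

theorem conj_conj {N : ℕ} (c d : Fin (3 * N)) : Function.Involutive (conj (N := N) c d) := by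
  intro ω
  apply Subtype.ext
  ext a
  simp [conj]

theorem xx_conj {N : ℕ} (c d : Fin (3 * N)) (ω : Omega N) (a b : Fin (3 * N)) :
    xx (conj c d ω) a b = xx ω (Equiv.swap c d a) (Equiv.swap c d b) := by
  unfold xx
  have : (conj c d ω).val a = b ↔ ω.val (Equiv.swap c d a) = Equiv.swap c d b := by
    change Equiv.swap c d (ω.val (Equiv.swap c d a)) = b ↔ _
    exact Equiv.swap_apply_eq_iff
  simp only [this]

theorem II_conj {N : ℕ} (c d : Fin (3 * N)) (ω : Omega N)
    (e : List (Fin (3 * N) × Fin (3 * N))) (hc : c ∉ sup e) (hd : d ∉ sup e) :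
    II (conj c d ω) e = II ω e := by
  induction e with
  | nil => rfl
  | cons p e ih =>
    simp only [sup, List.mem_cons, not_or] at hc hd
    rw [II, II, ih hc.2.2 hd.2.2, xx_conj,
      Equiv.swap_apply_of_ne_of_ne (Ne.symm hc.1) (Ne.symm hd.1),
      Equiv.swap_apply_of_ne_of_ne (Ne.symm hc.2.1) (Ne.symm hd.2.1)]

theorem sum_II {N : ℕ} (e : List (Fin (3 * N) × Fin (3 * N))) (he : (sup e).Nodup) :
    ∑ ω : Omega N, II ω e = (Fintype.card (Omega N) : ℝ) * pp N e.length := by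
  induction e with
  | nil => simp [II, pp]
  | cons p e ih =>
    obtain ⟨a, b⟩ := p
    simp only [sup, List.nodup_cons, List.mem_cons, not_or] at he
    obtain ⟨⟨hab, ha⟩, hb, hn⟩ := he
    have hih := ih hn
    have hsum : ∑ b' : Fin (3 * N), ∑ ω : Omega N, xx ω a b' * II ω e = ∑ ω : Omega N, II ω e := by
      rw [Finset.sum_comm]
      refine Finset.sum_congr rfl fun ω _ => ?_
      rw [← Finset.sum_mul]
      simp [xx]
    set T : Finset (Fin (3 * N)) := (a :: sup e).toFinset with hT
    have hTc : T.card = 2 * e.length + 1 := by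
      rw [hT, List.toFinset_card_of_nodup (List.nodup_cons.2 ⟨ha, hn⟩)]
      simp [sup_length]
    have hz : ∀ b' ∈ T, ∑ ω : Omega N, xx ω a b' * II ω e = 0 := by
      intro b' hb'
      refine Finset.sum_eq_zero fun ω _ => ?_
      by_contra hne
      have h1 := left_ne_zero_of_mul hne
      have h2 := II_closed ω e (right_ne_zero_of_mul hne)
      have h3 : ω.val a = b' := by
        by_contra hc; exact h1 (by simp [xx, hc])
      simp only [hT, List.mem_toFinset, List.mem_cons] at hb'
      rcases hb' with rfl | hb'
      · exact (ω.2 _).2 h3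
      · have := h2 b' hb'
        rw [(om_symm ω _ _).1 h3] at this
        exact ha this
    have hsame : ∀ b' ∈ Tᶜ, ∑ ω : Omega N, xx ω a b' * II ω e
        = ∑ ω : Omega N, xx ω a b * II ω e := by
      intro b' hb'
      simp only [hT, Finset.mem_compl, List.mem_toFinset, List.mem_cons, not_or] at hb'
      rw [← Equiv.sum_comp (conj_conj b b').toPerm]
      refine Finset.sum_congr rfl fun ω _ => ?_
      rw [Function.Involutive.coe_toPerm, II_conj b b' ω e hb hb'.2, xx_conj,
        Equiv.swap_apply_of_ne_of_ne hab (Ne.symm hb'.1), Equiv.swap_apply_right]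
    rw [← Finset.sum_add_sum_compl T, Finset.sum_eq_zero hz, zero_add,
      Finset.sum_congr rfl hsame, Finset.sum_const, Finset.card_compl, hTc, Fintype.card_fin,
      nsmul_eq_mul, hih] at hsum
    have hbT : b ∉ T := by
      simp only [hT, List.mem_toFinset, List.mem_cons, not_or]
      exact ⟨fun h => hab h.symm, hb⟩
    have hlt : T.card < 3 * N := by
      have := Finset.card_lt_univ_of_notMem hbT
      simpa using this
    have hK : 3 * N - (2 * e.length + 1) = 3 * N - 1 - 2 * e.length := by omega
    have hpos : ((3 * N - 1 - 2 * e.length : ℕ) : ℝ) ≠ 0 := by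
      have : 3 * N - 1 - 2 * e.length ≠ 0 := by omega
      exact_mod_cast this
    rw [hK] at hsum
    simp only [II, List.length_cons]
    unfold pp at hsum ⊢
    rw [Finset.prod_range_succ, ← mul_assoc, ← hsum]
    field_simp

/-! ### Main induction -/

theorem cc_succ (p : ℕ → ℝ) (n k : ℕ) : cc p (n + 1) k = cc p n k + 3 * cc p n (k + 1)
    + n * (18 * cc p (n - 1) (k + 2) + 24 * cc p (n - 1) (k + 3)) := by
  cases n with
  | zero => simp [cc]
  | succ n => rw [cc]; simp

/-- Indicator that the `i`-th half-edge of `u` is matched to the block `v`. -/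
def ff {N : ℕ} (ω : Omega N) (u v : Fin N) (i : Fin 3) : ℝ := ∑ j : Fin 3, xx ω (hh u i) (hh v j)

theorem choose_ff {N : ℕ} (ω : Omega N) (u v : Fin N) :
    (Nat.choose (MM ω u v) 2 : ℝ) + 4 * (Nat.choose (MM ω u v) 3 : ℝ)
      = ff ω u v 0 * ff ω u v 1 + ff ω u v 0 * ff ω u v 2 + ff ω u v 1 * ff ω u v 2
        + 4 * (ff ω u v 0 * ff ω u v 1 * ff ω u v 2) := by
  have hf : ∀ i, ff ω u v i = if blk (ω.val (hh u i)) = v then 1 else 0 := by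
    intro i
    have := ind_blk (ω.val (hh u i)) v
    have h2 := congrArg (Nat.cast : ℕ → ℝ) this
    push_cast at h2
    exact h2
  rw [hf, hf, hf, MM_eq, Fin.sum_univ_three]
  split_ifs <;> norm_num [Nat.choose]

theorem diag_xx {N : ℕ} (ω : Omega N) (v : Fin N) :
    ((MM ω v v / 2 : ℕ) : ℝ)
      = xx ω (hh v 0) (hh v 1) + xx ω (hh v 0) (hh v 2) + xx ω (hh v 1) (hh v 2) := by
  rw [MM_diag, Nat.mul_div_cancel_left _ (by norm_num)]
  unfold xx
  push_cast
  rfl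

theorem xx_col {N : ℕ} (ω : Omega N) (a a' b : Fin (3 * N)) (h : a ≠ a') :
    xx ω a b * xx ω a' b = 0 := by
  unfold xx
  by_cases h1 : ω.val a = b
  · by_cases h2 : ω.val a' = b
    · exact absurd (ω.val.injective (h1.trans h2.symm)) h
    · simp [h2]
  · simp [h1]

theorem main_ind {N : ℕ} : ∀ (n : ℕ) (W : Finset (Fin N)), W.card = n →
    ∀ e : List (Fin (3 * N) × Fin (3 * N)), (sup e).Nodup → (∀ a ∈ sup e, blk a ∉ W) →
    ∑ ω : Omega N, II ω e * (2 : ℝ) ^ XW (MM ω) W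
      = (Fintype.card (Omega N) : ℝ) * cc (pp N) n e.length := by
  intro n
  induction n using Nat.strong_induction_on with
  | _ n IH =>
  intro W hW e he hav
  rcases n with _ | n
  · rw [Finset.card_eq_zero] at hW
    subst hW
    rw [cc, ← sum_II e he]
    simp [XW]
  · have hne : W.Nonempty := by rw [← Finset.card_pos]; omega
    obtain ⟨v, V, hv, rfl⟩ : ∃ v V, (∀ u ∈ V, u < v) ∧ W = insert v V := by
      refine ⟨W.max' hne, W.erase (W.max' hne), ?_, ?_⟩
      · intro u hu
        exact lt_of_le_of_ne (W.le_max' u (Finset.mem_of_mem_erase hu)) (Finset.ne_of_mem_erase hu)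
      · rw [Finset.insert_erase (W.max'_mem hne)]
    have hvV : v ∉ V := fun h => lt_irrefl _ (hv v h)
    have hV : V.card = n := by rw [Finset.card_insert_of_notMem hvV] at hW; omega
    have havV : ∀ a ∈ sup e, blk a ∉ V := fun a ha h => hav a ha (Finset.mem_insert_of_mem h)
    have hav' : ∀ i, hh v i ∉ sup e := fun i h => by
      have := hav _ h
      rw [blk_hh] at this
      exact this (Finset.mem_insert_self _ _)
    -- loops
    have hloop : ∀ i j : Fin 3, i ≠ j →
        ∑ ω : Omega N, II ω e * xx ω (hh v i) (hh v j) * (2 : ℝ) ^ XW (MM ω) V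
          = (Fintype.card (Omega N) : ℝ) * cc (pp N) n (e.length + 1) := by
      intro i j hij
      refine Eq.trans ?_ (IH n (by omega) V hV ((hh v i, hh v j) :: e) ?_ ?_)
      · refine Finset.sum_congr rfl fun ω _ => ?_
        simp only [II]; ring
      · simp only [sup, List.nodup_cons, List.mem_cons, not_or]
        exact ⟨⟨fun h => hij (hh_inj.1 h).2, hav' i⟩, hav' j, he⟩
      · simp only [sup, List.mem_cons]
        rintro a (rfl | rfl | ha)
        · rw [blk_hh]; exact hvV
        · rw [blk_hh]; exact hvV
        · exact havV a ha
    have hpair : ∀ u ∈ V, ∀ i i' j j' : Fin 3, i ≠ i' → 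
        ∑ ω : Omega N, II ω e * (xx ω (hh u i) (hh v j) * xx ω (hh u i') (hh v j'))
            * (2 : ℝ) ^ XW (MM ω) (V.erase u)
          = if j = j' then 0
            else (Fintype.card (Omega N) : ℝ) * cc (pp N) (n - 1) (e.length + 2) := by
      intro u hu i i' j j' hi
      split_ifs with hj
      · subst hj
        refine Finset.sum_eq_zero fun ω _ => ?_
        rw [xx_col ω _ _ _ (fun h => hi (hh_inj.1 h).2)]; simp
      · have huv : u ≠ v := (hv u hu).ne
        have hau : ∀ i, hh u i ∉ sup e := fun i h => by
          have := havV _ h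
          rw [blk_hh] at this
          exact this hu
        have hVpos : 0 < V.card := Finset.card_pos.2 ⟨u, hu⟩
        refine Eq.trans ?_ (IH (n - 1) (by omega) (V.erase u) (by rw [Finset.card_erase_of_mem hu, hV])
          ((hh u i, hh v j) :: (hh u i', hh v j') :: e) ?_ ?_)
        · refine Finset.sum_congr rfl fun ω _ => ?_
          simp only [II]; ring
        · simp only [sup, List.nodup_cons, List.mem_cons, not_or, hh_inj]
          simp [hi, hj, huv, huv.symm, hau, hav', he]
        · simp only [sup, List.mem_cons]
          rintro a (rfl | rfl | rfl | rfl | ha)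
          · simp [blk_hh]
          · simp [blk_hh, hvV]
          · simp [blk_hh]
          · simp [blk_hh, hvV]
          · exact fun h => havV a ha (Finset.mem_of_mem_erase h)
    have htrip : ∀ u ∈ V, ∀ j j' j'' : Fin 3,
        ∑ ω : Omega N, II ω e * (xx ω (hh u 0) (hh v j) * xx ω (hh u 1) (hh v j')
              * xx ω (hh u 2) (hh v j'')) * (2 : ℝ) ^ XW (MM ω) (V.erase u)
          = if j = j' ∨ j = j'' ∨ j' = j'' then 0
            else (Fintype.card (Omega N) : ℝ) * cc (pp N) (n - 1) (e.length + 3) := by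
      intro u hu j j' j''
      have hn01 : hh u 0 ≠ hh u 1 := fun h => by simpa using (hh_inj.1 h).2
      have hn02 : hh u 0 ≠ hh u 2 := fun h => by simpa using (hh_inj.1 h).2
      have hn12 : hh u 1 ≠ hh u 2 := fun h => by simpa using (hh_inj.1 h).2
      split_ifs with hj
      · refine Finset.sum_eq_zero fun ω _ => ?_
        rcases hj with rfl | rfl | rfl
        · rw [xx_col ω _ _ _ hn01]; simp
        · rw [mul_right_comm (xx ω _ _), xx_col ω _ _ _ hn02]; simp
        · rw [mul_assoc (xx ω _ _), xx_col ω _ _ _ hn12]; simp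
      · simp only [not_or] at hj
        have huv : u ≠ v := (hv u hu).ne
        have hau : ∀ i, hh u i ∉ sup e := fun i h => by
          have := havV _ h
          rw [blk_hh] at this
          exact this hu
        have hVpos : 0 < V.card := Finset.card_pos.2 ⟨u, hu⟩
        refine Eq.trans ?_ (IH (n - 1) (by omega) (V.erase u) (by rw [Finset.card_erase_of_mem hu, hV])
          ((hh u 0, hh v j) :: (hh u 1, hh v j') :: (hh u 2, hh v j'') :: e) ?_ ?_)
        · refine Finset.sum_congr rfl fun ω _ => ?_
          simp only [II]; ring
        · simp only [sup, List.nodup_cons, List.mem_cons, not_or, hh_inj]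
          simp [hj, huv, huv.symm, hau, hav', he]
        · simp only [sup, List.mem_cons]
          rintro a (rfl | rfl | rfl | rfl | rfl | rfl | ha)
          · simp [blk_hh]
          · simp [blk_hh, hvV]
          · simp [blk_hh]
          · simp [blk_hh, hvV]
          · simp [blk_hh]
          · simp [blk_hh, hvV]
          · exact fun h => havV a ha (Finset.mem_of_mem_erase h)
    have hff2 : ∀ u ∈ V, ∀ i i' : Fin 3, i ≠ i' →
        ∑ ω : Omega N, II ω e * (ff ω u v i * ff ω u v i') * (2 : ℝ) ^ XW (MM ω) (V.erase u)
          = 6 * ((Fintype.card (Omega N) : ℝ) * cc (pp N) (n - 1) (e.length + 2)) := by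
      intro u hu i i' hi
      have h1 : ∀ ω : Omega N,
          II ω e * (ff ω u v i * ff ω u v i') * (2 : ℝ) ^ XW (MM ω) (V.erase u)
          = ∑ j : Fin 3, ∑ j' : Fin 3,
            II ω e * (xx ω (hh u i) (hh v j) * xx ω (hh u i') (hh v j'))
            * (2 : ℝ) ^ XW (MM ω) (V.erase u) := by
        intro ω
        unfold ff
        simp only [Fin.sum_univ_three]
        ring
      simp only [h1]
      rw [Finset.sum_comm]
      simp_rw [Finset.sum_comm (s := (Finset.univ : Finset (Omega N))), hpair u hu i i' _ _ hi]
      simp [Fin.sum_univ_three]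
      ring
    have hff3 : ∀ u ∈ V,
        ∑ ω : Omega N, II ω e * (ff ω u v 0 * ff ω u v 1 * ff ω u v 2)
            * (2 : ℝ) ^ XW (MM ω) (V.erase u)
          = 6 * ((Fintype.card (Omega N) : ℝ) * cc (pp N) (n - 1) (e.length + 3)) := by
      intro u hu
      have h1 : ∀ ω : Omega N,
          II ω e * (ff ω u v 0 * ff ω u v 1 * ff ω u v 2) * (2 : ℝ) ^ XW (MM ω) (V.erase u)
          = ∑ j : Fin 3, ∑ j' : Fin 3, ∑ j'' : Fin 3,
            II ω e * (xx ω (hh u 0) (hh v j) * xx ω (hh u 1) (hh v j')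
              * xx ω (hh u 2) (hh v j'')) * (2 : ℝ) ^ XW (MM ω) (V.erase u) := by
        intro ω
        unfold ff
        simp only [Fin.sum_univ_three]
        ring
      simp only [h1]
      rw [Finset.sum_comm]
      simp_rw [Finset.sum_comm (s := (Finset.univ : Finset (Omega N))), htrip u hu]
      simp [Fin.sum_univ_three]
      ring
    have hu_all : ∀ u ∈ V,
        ∑ ω : Omega N, II ω e * (((Nat.choose (MM ω u v) 2 : ℝ)
            + 4 * (Nat.choose (MM ω u v) 3 : ℝ)) * (2 : ℝ) ^ XW (MM ω) (V.erase u))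
          = (Fintype.card (Omega N) : ℝ) * (18 * cc (pp N) (n - 1) (e.length + 2)
            + 24 * cc (pp N) (n - 1) (e.length + 3)) := by
      intro u hu
      have a1 := hff2 u hu 0 1 (by decide)
      have a2 := hff2 u hu 0 2 (by decide)
      have a3 := hff2 u hu 1 2 (by decide)
      have a4 := hff3 u hu
      calc _ = ∑ ω : Omega N, II ω e * (ff ω u v 0 * ff ω u v 1) * (2 : ℝ) ^ XW (MM ω) (V.erase u)
          + ∑ ω : Omega N, II ω e * (ff ω u v 0 * ff ω u v 2) * (2 : ℝ) ^ XW (MM ω) (V.erase u)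
          + ∑ ω : Omega N, II ω e * (ff ω u v 1 * ff ω u v 2) * (2 : ℝ) ^ XW (MM ω) (V.erase u)
          + 4 * ∑ ω : Omega N, II ω e * (ff ω u v 0 * ff ω u v 1 * ff ω u v 2)
            * (2 : ℝ) ^ XW (MM ω) (V.erase u) := by
            rw [Finset.mul_sum, ← Finset.sum_add_distrib, ← Finset.sum_add_distrib,
              ← Finset.sum_add_distrib]
            refine Finset.sum_congr rfl fun ω _ => ?_
            rw [choose_ff]; ring
        _ = _ := by rw [a1, a2, a3, a4]; ring
    have b0 := IH n (by omega) V hV e he havV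
    have b1 := hloop 0 1 (by decide)
    have b2 := hloop 0 2 (by decide)
    have b3 := hloop 1 2 (by decide)
    calc _ = ∑ ω : Omega N, II ω e * (2 : ℝ) ^ XW (MM ω) V
        + ∑ ω : Omega N, II ω e * xx ω (hh v 0) (hh v 1) * (2 : ℝ) ^ XW (MM ω) V
        + ∑ ω : Omega N, II ω e * xx ω (hh v 0) (hh v 2) * (2 : ℝ) ^ XW (MM ω) V
        + ∑ ω : Omega N, II ω e * xx ω (hh v 1) (hh v 2) * (2 : ℝ) ^ XW (MM ω) V
        + ∑ u ∈ V, ∑ ω : Omega N, II ω e * (((Nat.choose (MM ω u v) 2 : ℝ)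
            + 4 * (Nat.choose (MM ω u v) 3 : ℝ)) * (2 : ℝ) ^ XW (MM ω) (V.erase u)) := by
          rw [Finset.sum_comm (s := V), ← Finset.sum_add_distrib, ← Finset.sum_add_distrib,
            ← Finset.sum_add_distrib, ← Finset.sum_add_distrib]
          refine Finset.sum_congr rfl fun ω _ => ?_
          rw [XW_identity (MM ω) V v hv (MM_symm ω) (MM_le ω) (MM_add_le ω), diag_xx,
            ← Finset.mul_sum]
          ring
      _ = _ := by
          rw [Finset.sum_congr rfl hu_all, b0, b1, b2, b3, Finset.sum_const, hV, cc_succ,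
            nsmul_eq_mul]
          ring

theorem omega_nonempty (N : ℕ) (hN : Even N) : Nonempty (Omega N) := by
  obtain ⟨r, hr⟩ := hN
  let g : Fin (3 * N) → Fin (3 * N) := fun a =>
    if h : a.val % 2 = 0 then ⟨a.val + 1, by omega⟩ else ⟨a.val - 1, by omega⟩
  have hg : Function.Involutive g := by
    intro a
    apply Fin.ext
    by_cases h : a.val % 2 = 0
    · have h1 : g a = ⟨a.val + 1, by omega⟩ := dif_pos h
      have h2 : ¬ (g a).val % 2 = 0 := by rw [h1]; simp; omega
      have h3 : g (g a) = ⟨(g a).val - 1, by omega⟩ := dif_neg h2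
      have h4 := congrArg Fin.val h1
      have h5 := congrArg Fin.val h3
      simp only at h4 h5
      omega
    · have h1 : g a = ⟨a.val - 1, by omega⟩ := dif_neg h
      have h2 : (g a).val % 2 = 0 := by rw [h1]; simp; omega
      have h3 : g (g a) = ⟨(g a).val + 1, by omega⟩ := dif_pos h2
      have h4 := congrArg Fin.val h1
      have h5 := congrArg Fin.val h3
      simp only at h4 h5
      omega
  refine ⟨⟨hg.toPerm, fun a => ⟨hg a, ?_⟩⟩⟩
  intro h
  have h' : (g a).val = a.val := congrArg Fin.val h
  by_cases h0 : a.val % 2 = 0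
  · have h1 : g a = ⟨a.val + 1, by omega⟩ := dif_pos h0
    rw [h1] at h'; simp at h'
  · have h1 : g a = ⟨a.val - 1, by omega⟩ := dif_neg h0
    rw [h1] at h'; simp at h'; omega

theorem expectation_eq (N : ℕ) (hN : Even N) :
    (∑ ω : Omega N, (2 : ℝ) ^ (X1 ω + X2 ω)) / (Nat.card (Omega N) : ℝ) = cc (pp N) N 0 := by
  have := main_ind (N := N) N Finset.univ (by simp) [] (by simp [sup]) (by simp [sup])
  simp only [II, one_mul, List.length_nil] at this
  simp only [X_eq]
  rw [this, Nat.card_eq_fintype_card]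
  have hne := omega_nonempty N hN
  have : (Fintype.card (Omega N) : ℝ) ≠ 0 := by exact_mod_cast Fintype.card_ne_zero
  field_simp

/-- Theorem: `E[2^{X_{N,1} + X_{N,2}}] → e²` as `N → ∞` through even `N`. -/
theorem expectation_two_pow_loops_add_parallel :
    Tendsto
      (fun N : ℕ =>
        (∑ ω : Omega N, (2 : ℝ) ^ (X1 ω + X2 ω)) / (Nat.card (Omega N) : ℝ))
      (atTop ⊓ 𝓟 {N : ℕ | Even N}) (𝓝 (Real.exp 2)) := by
  refine (tendsto_cc.mono_left inf_le_left).congr' ?_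
  filter_upwards [mem_inf_of_right (mem_principal_self _)] with N hN
  exact (expectation_eq N hN).symm
end

section
/- The number of configurations giving a one-vertex triangulated surface satisfies: |{ω ∈ Ω_N : the permutation ω∘ρ of Fin (3N) has exactly one orbit}| ∼ (2√2/(3N))·(3N/e)^{3N/2} as N → ∞ through values N ≡ 2 (mod 4); that is, the ratio of the left-hand side to the right-hand side tends to 1 along such N. -/
open Filter Real Topology

/-- The underlying function of `ρ`: the 3-cycle `(3v, 3v+1, 3v+2)` on each block. -/
def rhoFun {N : ℕ} (a : Fin (3 * N)) : Fin (3 * N) :=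
  ⟨3 * (a.val / 3) + (a.val + 1) % 3, by have := a.isLt; omega⟩

/-- `ρ`: the permutation of the half-edges acting as the 3-cycle `(3v, 3v+1, 3v+2)`
on each block `B_v`. -/
noncomputable def rho (N : ℕ) : Equiv.Perm (Fin (3 * N)) :=
  Equiv.ofBijective rhoFun
    (Finite.injective_iff_bijective.mp (by
      intro a b h
      have h' := congrArg Fin.val h
      simp only [rhoFun] at h'
      exact Fin.ext (by omega)))

/-- `ω` encodes a one-vertex (one-puncture) triangulation exactly when the permutation
`ω ∘ ρ` has a single orbit on the half-edges. -/
def OneOrbit {N : ℕ} (ω : Omega N) : Prop :=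
  ∀ a b : Fin (3 * N), (ω.val * rho N).SameCycle a b

namespace OV

open Equiv Equiv.Perm Finset

section general
variable {X : Type*} [Fintype X] [DecidableEq X]

/-- fixed-point-free involution -/
def IsM (ω : Perm X) : Prop := ∀ a, ω (ω a) = a ∧ ω a ≠ a

instance (ω : Perm X) : Decidable (IsM ω) := by unfold IsM; infer_instance

/-- `τ` agrees with `σ` on `S` and is the identity off `S`. -/
def Agr (σ : X → X) (S : Finset X) (τ : Perm X) : Prop :=
  ∀ i, τ i = if i ∈ S then σ i else i

instance (σ : X → X) (S : Finset X) (τ : Perm X) : Decidable (Agr σ S τ) := by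
  unfold Agr; infer_instance

/-- sign of the restriction of `σ` to `S` (zero if `S` is not invariant). -/
def w (σ : X → X) (S : Finset X) : ℤ :=
  ∑ τ : Perm X, if Agr σ S τ then ((sign τ : ℤˣ) : ℤ) else 0

lemma w_eq {σ : X → X} {S : Finset X} {τ : Perm X} (h : Agr σ S τ) :
    w σ S = ((sign τ : ℤˣ) : ℤ) := by
  unfold w
  rw [Finset.sum_eq_single τ]
  · rw [if_pos h]
  · intro b _ hb
    rw [if_neg]
    intro h'
    apply hb
    ext i
    rw [h i, h' i]
  · simp

lemma exists_of_w_ne {σ : X → X} {S : Finset X} (h : w σ S ≠ 0) : ∃ τ, Agr σ S τ := by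
  by_contra hc
  push Not at hc
  apply h
  unfold w
  apply Finset.sum_eq_zero
  intro τ _
  rw [if_neg (hc τ)]

lemma mem_of_agr {σ : X → X} {S : Finset X} {τ : Perm X} (h : Agr σ S τ) {i : X} (hi : i ∈ S) :
    σ i ∈ S := by
  by_contra hc
  have h1 := h i
  rw [if_pos hi] at h1
  have h2 := h (σ i)
  rw [if_neg hc] at h2
  have : σ i = i := τ.injective (by rw [h2, h1])
  exact hc (by rw [this]; exact hi)

/-- the cofactor matrix -/
def cofM (σ : Perm X) (z : X) : Matrix X X ℤ := fun i j =>
  (if i = z then 0 else if σ i = j then -1 else 0) + (if i = j then 1 else 0)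

lemma det_cofM (σ : Perm X) (z : X) :
    (cofM σ z).det = ∑ S : Finset X, if z ∈ S then 0 else (-1) ^ #S * w σ S := by
  rw [← Matrix.det_transpose, Matrix.det_apply']
  simp only [Matrix.transpose_apply, cofM]
  simp_rw [Fintype.prod_add, Finset.mul_sum]
  rw [Finset.sum_comm]
  apply Finset.sum_congr rfl
  intro S _
  unfold w
  split_ifs with hz
  · apply Finset.sum_eq_zero
    intro τ _
    rw [Finset.prod_eq_zero hz (by simp)]
    simp
  · rw [Finset.mul_sum]
    apply Finset.sum_congr rfl
    intro τ _
    split_ifs with hA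
    · have h1 : ∏ x ∈ S, (if x = z then 0 else if σ x = τ x then (-1 : ℤ) else 0) = (-1) ^ #S := by
        rw [Finset.prod_congr rfl (g := fun _ => (-1 : ℤ)), Finset.prod_const]
        intro x hx
        rw [if_neg (by rintro rfl; exact hz hx), if_pos]
        rw [hA x, if_pos hx]
      have h2 : ∏ x ∈ Sᶜ, (if x = τ x then (1 : ℤ) else 0) = 1 := by
        apply Finset.prod_eq_one
        intro x hx
        rw [if_pos]
        rw [hA x, if_neg (by simpa using hx)]
      rw [h1, h2, Int.cast_id]; ring
    · simp only [Agr] at hA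
      push Not at hA
      obtain ⟨i, hi⟩ := hA
      by_cases hS : i ∈ S
      · rw [Finset.prod_eq_zero hS]
        · simp
        · rw [if_pos hS] at hi
          simp [Ne.symm hi]
      · rw [Finset.prod_eq_zero (s := Sᶜ) (i := i) (by simpa using hS)]
        · simp
        · rw [if_neg hS] at hi
          simp [Ne.symm hi]

lemma sum_w_zero (σ : Perm X) (z x : X) (h : ¬ σ.SameCycle z x) :
    (∑ S : Finset X, if z ∈ S then 0 else (-1) ^ #S * w σ S) = 0 := by
  rw [← det_cofM, ← Matrix.exists_mulVec_eq_zero_iff]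
  refine ⟨fun y => if σ.SameCycle x y then 1 else 0, ?_, ?_⟩
  · intro h'
    have := congrFun h' x
    simp only [Pi.zero_apply] at this
    rw [if_pos (SameCycle.refl σ x)] at this
    exact one_ne_zero this
  · ext i
    simp only [Matrix.mulVec, dotProduct, cofM, add_mul, Finset.sum_add_distrib, Pi.zero_apply]
    by_cases hi : i = z
    · subst hi
      have : ¬ σ.SameCycle x i := fun h' => h h'.symm
      simp only [ite_mul, if_true, zero_mul, one_mul, Finset.sum_const_zero, zero_add,
        Finset.sum_ite_eq, Finset.mem_univ]
      rw [if_neg this]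
    · simp only [ite_mul, hi, if_false, zero_mul, one_mul, Finset.sum_ite_eq, Finset.mem_univ,
        if_true, sameCycle_apply_right]
      ring

lemma sum_w_one (σ : Perm X) (z : X) (h : ∀ x, σ.SameCycle z x) :
    (∑ S : Finset X, if z ∈ S then 0 else (-1) ^ #S * w σ S) = 1 := by
  rw [Finset.sum_eq_single ∅]
  · have : Agr σ ∅ (1 : Perm X) := fun i => by simp
    simp [w_eq this]
  · intro S _ hS
    split_ifs with hz
    · rfl
    · by_contra hc
      have hw : w σ S ≠ 0 := by
        intro h0; rw [h0] at hc; simp at hc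
      obtain ⟨τ, hτ⟩ := exists_of_w_ne hw
      obtain ⟨y, hy⟩ := Finset.nonempty_iff_ne_empty.mpr hS
      obtain ⟨k, _, hk⟩ := ((h y).symm).exists_pow_eq'
      apply hz
      rw [← hk]
      clear hk
      induction k with
      | zero => simpa using hy
      | succ k ih =>
        rw [pow_succ', Perm.mul_apply]
        exact mem_of_agr hτ (ih (by omega))
  · simp

/-- averaged over the base point. -/
lemma card_mul_ind [Nonempty X] (σ : Perm X) :
    (∑ S : Finset X, ((Fintype.card X : ℤ) - #S) * ((-1) ^ #S * w σ S)) =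
      if ∀ a b, σ.SameCycle a b then (Fintype.card X : ℤ) else 0 := by
  have h1 : (∑ S : Finset X, ((Fintype.card X : ℤ) - #S) * ((-1) ^ #S * w σ S)) =
      ∑ z : X, ∑ S : Finset X, if z ∈ S then 0 else (-1) ^ #S * w σ S := by
    rw [Finset.sum_comm]
    apply Finset.sum_congr rfl
    intro S _
    rw [Finset.sum_congr rfl (fun z _ => (ite_not (z ∈ S) _ _).symm), ← Finset.sum_filter,
      Finset.sum_const, nsmul_eq_mul]
    congr 1
    have : (univ.filter (fun z => ¬ z ∈ S)) = Sᶜ := by ext; simp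
    rw [this, Finset.card_compl, Nat.cast_sub (Finset.card_le_univ S)]
  rw [h1]
  split_ifs with h
  · rw [Finset.sum_congr rfl (fun z _ => sum_w_one σ z (h z))]
    simp
  · push Not at h
    obtain ⟨a, b, hab⟩ := h
    apply Finset.sum_eq_zero
    intro z _
    by_cases hz : σ.SameCycle z a
    · exact sum_w_zero σ z b (fun h' => hab (hz.symm.trans h'))
    · exact sum_w_zero σ z a hz

/-- sum of signs over matchings -/
def AS (ρ : Perm X) (S : Finset X) : ℤ := ∑ ω : Perm X with IsM ω, w (ω * ρ) S

lemma AS_zero (ρ : Perm X) (S : Finset X) (a b : X) (hab : a ≠ b) (ha : a ∈ S) (hb : b ∈ S)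
    (ha' : ρ.symm a ∉ S) (hb' : ρ.symm b ∉ S) : AS ρ S = 0 := by
  have key : ∀ ω : Perm X, w (swap a b * ω * swap a b * ρ : Perm X) S = - w (ω * ρ : Perm X) S := by
    intro ω
    have e : ∀ i ∈ S, swap a b (ρ i) = ρ i := by
      intro i hi
      apply swap_apply_of_ne_of_ne
      · rintro rfl; simp at ha'; exact ha' hi
      · rintro rfl; simp at hb'; exact hb' hi
    have e2 : ∀ i, i ∉ S → swap a b i = i := by
      intro i hi
      apply swap_apply_of_ne_of_ne
      · rintro rfl; exact hi ha
      · rintro rfl; exact hi hb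
    by_cases h0 : w (ω * ρ : Perm X) S = 0
    · rw [h0, neg_zero]
      by_contra hc
      obtain ⟨τ, hτ⟩ := exists_of_w_ne hc
      have : Agr (ω * ρ : Perm X) S (swap a b * τ) := by
        intro i
        rw [Perm.mul_apply, hτ i]
        split_ifs with hi
        · simp [e i hi]
        · exact e2 i hi
      rw [w_eq this] at h0
      simp at h0
    · obtain ⟨τ, hτ⟩ := exists_of_w_ne h0
      have : Agr (swap a b * ω * swap a b * ρ : Perm X) S (swap a b * τ) := by
        intro i
        rw [Perm.mul_apply, hτ i]
        split_ifs with hi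
        · simp [e i hi]
        · exact e2 i hi
      rw [w_eq this, w_eq hτ]
      simp [sign_swap hab]
  have hs : AS ρ S = - AS ρ S := by
    unfold AS
    rw [← Finset.sum_neg_distrib]
    apply Finset.sum_bij' (fun ω _ => swap a b * ω * swap a b) (fun ω _ => swap a b * ω * swap a b)
    · intro ω hω
      simp only [mem_filter, mem_univ, true_and] at hω ⊢
      intro x
      refine ⟨by simp [(hω _).1], ?_⟩
      intro h
      apply (hω (swap a b x)).2
      apply (swap a b).injective
      simpa using h
    · intro ω hω
      simp only [mem_filter, mem_univ, true_and] at hω ⊢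
      intro x
      refine ⟨by simp [(hω _).1], ?_⟩
      intro h
      apply (hω (swap a b x)).2
      apply (swap a b).injective
      simpa using h
    · intro ω _; ext x; simp
    · intro ω _; ext x; simp
    · intro ω _; rw [key]; simp
  omega

lemma sign_invol (κ : Perm X) (h : κ ^ 2 = 1) : sign κ = (-1) ^ (#κ.support / 2) := by
  have h1 := cycleType_of_pow_prime_eq_one (p := 2) h
  have h2 := sum_cycleType κ
  rw [h1] at h2
  simp at h2
  rw [sign_of_cycleType, sum_cycleType, ← h2, Nat.mul_div_cancel _ (by norm_num), pow_add, pow_mul']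
  simp

/-- restriction of a perm to an invariant set. -/
lemma exists_restrict (σ : Perm X) (U : Finset X) (h : ∀ i ∈ U, σ i ∈ U) :
    ∃ κ : Perm X, Agr σ U κ := by
  refine ⟨Equiv.ofBijective (fun i => if i ∈ U then σ i else i)
    (Finite.injective_iff_bijective.mp ?_), fun i => rfl⟩
  intro i j hij
  simp only at hij
  split_ifs at hij with h1 h2 h2
  · exact σ.injective hij
  · exact absurd (hij ▸ h i h1) h2
  · exact absurd (hij ▸ h j h2) h1
  · exact hij

lemma sign_restrict (ω : Perm X) (hω : IsM ω) (U : Finset X) (h : ∀ i ∈ U, ω i ∈ U) (κ : Perm X)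
    (hκ : Agr ω U κ) : sign κ = (-1) ^ (#U / 2) := by
  rw [sign_invol κ]
  · congr 3
    ext i
    rw [mem_support, hκ i]
    split_ifs with hi <;> simp [hi, (hω i).2]
  · ext i
    rw [pow_two, Perm.mul_apply, hκ i]
    split_ifs with hi
    · rw [hκ, if_pos (h i hi)]; simp [(hω i).1]
    · rw [hκ, if_neg hi]; simp

lemma sign_restrict_three (ρ : Perm X) (h3 : ∀ x, ρ (ρ (ρ x)) = x) (U : Finset X)
    (h : ∀ i ∈ U, ρ i ∈ U) (κ : Perm X) (hκ : Agr ρ U κ) : sign κ = 1 := by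
  have : κ ^ 3 = 1 := by
    ext i
    rw [pow_succ, pow_two, Perm.mul_apply, Perm.mul_apply, hκ i]
    split_ifs with hi
    · rw [hκ (ρ i), if_pos (h i hi), hκ, if_pos (h _ (h i hi)), h3]; simp
    · rw [hκ i, if_neg hi, hκ i, if_neg hi]; simp
  have h2 := congrArg Perm.sign this
  rw [map_pow, map_one] at h2
  rcases Int.units_eq_one_or (sign κ) with h' | h' <;> rw [h'] at h2 ⊢
  exact absurd h2 (by decide)

/-- number of matchings preserving `U`. -/
def c0 (U : Finset X) : ℕ := #{ω : Perm X | IsM ω ∧ ∀ i ∈ U, ω i ∈ U}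

/-- number of matchings preserving `U` with `ω b = a`. -/
def c1 (U : Finset X) (b a : X) : ℕ := #{ω : Perm X | IsM ω ∧ (∀ i ∈ U, ω i ∈ U) ∧ ω b = a}

lemma c1_swap (U : Finset X) (b a a' : X) (hb : b ∉ U) (ha : a ∉ U) (ha' : a' ∉ U) (h : a ≠ b)
    (h' : a' ≠ b) : c1 U b a ≤ c1 U b a' := by
  have e2 : ∀ i ∈ U, swap a a' i = i := by
    intro i hi
    apply swap_apply_of_ne_of_ne
    · rintro rfl; exact ha hi
    · rintro rfl; exact ha' hi
  unfold c1
  apply Finset.card_le_card_of_injOn (fun ω => swap a a' * ω * swap a a')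
  · intro ω hω
    simp only [coe_filter, Set.mem_ofPred_eq, mem_univ, true_and] at hω ⊢
    obtain ⟨h1, h2, h3⟩ := hω
    refine ⟨?_, ?_, ?_⟩
    · intro x
      refine ⟨by simp [(h1 _).1], ?_⟩
      intro h
      apply (h1 (swap a a' x)).2
      apply (swap a a').injective
      simpa using h
    · intro i hi
      simp [e2 i hi, e2 _ (h2 i hi), h2 i hi]
    · rw [Perm.mul_apply, Perm.mul_apply, swap_apply_of_ne_of_ne h.symm h'.symm, h3]
      simp
  · intro ω _ ω' _ hh
    simpa using hh

lemma c1_mul (U : Finset X) (b a : X) (hb : b ∉ U) (ha : a ∉ U) (h : a ≠ b) :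
    (Fintype.card X - #U - 1) * c1 U b a = c0 U := by
  have h1 : c0 U = ∑ x ∈ (insert b U)ᶜ, c1 U b x := by
    unfold c0 c1
    rw [Finset.card_eq_sum_card_fiberwise (f := fun ω => ω b) (t := (insert b U)ᶜ)]
    · apply Finset.sum_congr rfl
      intro x _
      rw [Finset.filter_filter]
      simp only [and_assoc]
    · intro ω hω
      simp only [coe_filter, Set.mem_ofPred_eq, mem_univ, true_and] at hω
      obtain ⟨h1, h2⟩ := hω
      simp only [coe_compl, Set.mem_compl_iff, mem_coe, mem_insert, not_or]
      refine ⟨(h1 b).2, fun h => hb ?_⟩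
      have := h2 _ h
      rwa [(h1 b).1] at this
  have h2 : ∀ x ∈ (insert b U)ᶜ, c1 U b x = c1 U b a := by
    intro x hx
    simp only [mem_compl, mem_insert, not_or] at hx
    exact le_antisymm (c1_swap U b x a hb hx.2 ha hx.1 h) (c1_swap U b a x hb ha hx.2 h hx.1)
  rw [h1, Finset.sum_congr rfl h2, Finset.sum_const, Finset.card_compl, Finset.card_insert_of_notMem hb,
    smul_eq_mul]
  rfl

lemma AS_type0 (ρ : Perm X) (h3 : ∀ x, ρ (ρ (ρ x)) = x) (U : Finset X)
    (h : ∀ i ∈ U, ρ i ∈ U) : AS ρ U = (-1) ^ (#U / 2) * c0 U := by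
  obtain ⟨r, hr⟩ := exists_restrict ρ U h
  have hr1 := sign_restrict_three ρ h3 U h r hr
  have key : ∀ ω : Perm X, IsM ω → w (ω * ρ : Perm X) U =
      if ∀ i ∈ U, ω i ∈ U then (-1) ^ (#U / 2) else 0 := by
    intro ω hω
    split_ifs with hU
    · obtain ⟨κ, hκ⟩ := exists_restrict ω U hU
      have : Agr (ω * ρ : Perm X) U (κ * r) := by
        intro i
        rw [Perm.mul_apply, hr i]
        split_ifs with hi
        · rw [hκ, if_pos (h i hi)]; rfl
        · rw [hκ, if_neg hi]
      rw [w_eq this, map_mul, hr1, sign_restrict ω hω U hU κ hκ]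
      simp
    · by_contra hc
      obtain ⟨τ, hτ⟩ := exists_of_w_ne hc
      apply hU
      intro i hi
      have := mem_of_agr hτ (h _ (h i hi))
      simpa [h3] using this
  unfold AS c0
  rw [Finset.sum_congr rfl (fun ω hω => key ω (by simpa using hω)), ← Finset.sum_filter,
    Finset.filter_filter, Finset.sum_const, nsmul_eq_mul, mul_comm]

lemma AS_type1 (ρ : Perm X) (U S : Finset X) (a b : X) (r : Perm X)
    (ha : a ∉ U) (hb : b ∉ U) (hab : a ≠ b)
    (hS : S = insert a U) (hT : S.image ρ = insert b U)
    (hr : ∀ i, i ∉ S → r i = i) (hr1 : ∀ i ∈ S, ρ i ∈ U → r i = ρ i)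
    (hr2 : ∀ i ∈ S, ρ i = b → r i = a) :
    AS ρ S = (-1) ^ (#U / 2) * ((sign r : ℤˣ) : ℤ) * c1 U b a := by
  have key : ∀ ω : Perm X, IsM ω → w (ω * ρ : Perm X) S =
      if (∀ i ∈ U, ω i ∈ U) ∧ ω b = a then (-1) ^ (#U / 2) * ((sign r : ℤˣ) : ℤ) else 0 := by
    intro ω hω
    split_ifs with hU
    · obtain ⟨hU, hba⟩ := hU
      obtain ⟨κ, hκ⟩ := exists_restrict ω U hU
      have : Agr (ω * ρ : Perm X) S (κ * r) := by
        intro i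
        rw [Perm.mul_apply]
        split_ifs with hi
        · have : ρ i ∈ insert b U := hT ▸ Finset.mem_image_of_mem _ hi
          rcases Finset.mem_insert.mp this with h | h
          · rw [hr2 i hi h, hκ, if_neg ha, Perm.mul_apply, h, hba]
          · rw [hr1 i hi h, hκ, if_pos h]; rfl
        · rw [hr i hi, hκ, if_neg]
          intro h
          exact hi (by rw [hS]; exact Finset.mem_insert_of_mem h)
      rw [w_eq this, map_mul, sign_restrict ω hω U hU κ hκ]
      simp
    · by_contra hc
      obtain ⟨τ, hτ⟩ := exists_of_w_ne hc
      have h1 : ∀ y ∈ insert b U, ω y ∈ insert a U := by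
        intro y hy
        rw [← hT] at hy
        obtain ⟨i, hi, rfl⟩ := Finset.mem_image.mp hy
        have := mem_of_agr hτ hi
        rw [hS] at this
        exact this
      have hba : ω b = a := by
        rcases Finset.mem_insert.mp (h1 b (by simp)) with h | h
        · exact h
        · have := h1 _ (Finset.mem_insert_of_mem h)
          rw [(hω b).1] at this
          rcases Finset.mem_insert.mp this with h | h
          · exact absurd h.symm hab
          · exact absurd h hb
      apply hU
      refine ⟨fun i hi => ?_, hba⟩
      rcases Finset.mem_insert.mp (h1 i (Finset.mem_insert_of_mem hi)) with h | h
      · rw [← hba] at h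
        exact absurd (ω.injective h ▸ hi) hb
      · exact h
  unfold AS c1
  rw [Finset.sum_congr rfl (fun ω hω => key ω (by simpa using hω)), ← Finset.sum_filter,
    Finset.filter_filter, Finset.sum_const, nsmul_eq_mul, mul_comm]

end general
end OV

namespace OV

open Equiv Equiv.Perm Finset
open scoped Nat

section counting
variable {X : Type*} [Fintype X] [DecidableEq X]

/-- number of perfect matchings of a `k`-set -/
def nm (k : ℕ) : ℕ := if Even k then (k - 1)‼ else 0

lemma fact_div (k : ℕ) : (2 * k)! / (2 ^ k * k !) = (2 * k - 1)‼ := by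
  rcases k with _ | k
  · simp
  · apply Nat.div_eq_of_eq_mul_left (by positivity)
    rw [← Nat.doubleFactorial_two_mul]
    have : 2 * (k + 1) = (2 * k + 1) + 1 := by ring
    rw [this, Nat.factorial_eq_mul_doubleFactorial]
    simp [mul_comm]

lemma IsM.cycleType {ω : Perm X} (h : IsM ω) :
    ω.cycleType = Multiset.replicate ω.cycleType.card 2 ∧ ω.cycleType.card * 2 = Fintype.card X := by
  have h2 : ω ^ 2 = 1 := by
    ext i; rw [pow_two, Perm.mul_apply, (h i).1]; simp
  have h1 := cycleType_of_pow_prime_eq_one (p := 2) h2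
  refine ⟨h1, ?_⟩
  have h3 := sum_cycleType ω
  rw [h1] at h3
  simp only [Multiset.sum_replicate, smul_eq_mul] at h3
  rw [h3]
  have : ω.support = univ := by
    ext i; simp [(h i).2]
  rw [this, Finset.card_univ]

lemma card_IsM : #{ω : Perm X | IsM ω} = nm (Fintype.card X) := by
  unfold nm
  split_ifs with he
  · obtain ⟨k, hk⟩ := he
    have hk' : Fintype.card X = 2 * k := by omega
    have : ({ω : Perm X | IsM ω} : Finset (Perm X)) =
        ({g | g.cycleType = Multiset.replicate k 2} : Finset (Perm X)) := by
      ext ω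
      simp only [mem_filter, mem_univ, true_and]
      constructor
      · intro h
        obtain ⟨h1, h2⟩ := h.cycleType
        rw [h1]
        congr 1
        omega
      · intro h
        have h2 : ω ^ 2 = 1 := by
          rw [pow_prime_eq_one_iff]
          intro c hc
          rw [h] at hc
          exact (Multiset.mem_replicate.mp hc).2
        have h3 := sum_cycleType ω
        rw [h] at h3
        simp only [Multiset.sum_replicate, smul_eq_mul] at h3
        have h4 : ω.support = univ := by
          apply Finset.eq_univ_of_card
          omega
        intro a
        constructor
        · have := congrArg (fun f : Perm X => f a) h2
          simpa [pow_two] using this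
        · have : a ∈ ω.support := by rw [h4]; simp
          simpa using this
    rw [this, card_of_cycleType, if_pos]
    · rw [hk', ← fact_div]
      rcases Nat.eq_zero_or_pos k with h0 | h0
      · subst h0; simp
      · have : (Multiset.replicate k 2).toFinset = {2} := by
          rw [Multiset.toFinset_replicate, if_neg (by omega)]
        rw [this]
        simp [mul_comm]
    · constructor
      · simp; omega
      · intro a ha
        rw [(Multiset.mem_replicate.mp ha).2]
  · rw [Finset.card_eq_zero, Finset.filter_eq_empty_iff]
    intro ω _ h
    apply he
    obtain ⟨_, h2⟩ := h.cycleType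
    exact ⟨_, by rw [← h2]; ring⟩

lemma c0_eq (U : Finset X) : c0 U = nm #U * nm (Fintype.card X - #U) := by
  have hc : Fintype.card {x // x ∉ U} = Fintype.card X - #U := by
    rw [Fintype.card_subtype_compl]; simp
  have hU : Fintype.card {x // x ∈ U} = #U := by simp
  have h1 := card_IsM (X := {x // x ∈ U})
  have h2 := card_IsM (X := {x // x ∉ U})
  rw [hU] at h1
  rw [hc] at h2
  rw [← h1, ← h2, ← Finset.card_product]
  unfold c0
  symm
  apply Finset.card_bij (fun p _ => Perm.subtypeCongr p.1 p.2)
  · rintro ⟨f, g⟩ h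
    simp only [mem_product, mem_filter, mem_univ, true_and] at h ⊢
    obtain ⟨hf, hg⟩ := h
    constructor
    · intro a
      by_cases ha : a ∈ U
      · rw [Perm.subtypeCongr.left_apply _ _ ha, Perm.subtypeCongr.left_apply _ _ (f ⟨a, ha⟩).2]
        constructor
        · simp [(hf _).1]
        · intro h; exact (hf ⟨a, ha⟩).2 (Subtype.ext h)
      · rw [Perm.subtypeCongr.right_apply _ _ ha, Perm.subtypeCongr.right_apply _ _ (g ⟨a, ha⟩).2]
        constructor
        · simp [(hg _).1]
        · intro h; exact (hg ⟨a, ha⟩).2 (Subtype.ext h)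
    · intro i hi
      rw [Perm.subtypeCongr.left_apply _ _ hi]
      exact (f ⟨i, hi⟩).2
  · intro p _ q _ h
    have := Perm.subtypeCongrHom_injective (fun x => x ∈ U) (a₁ := p) (a₂ := q) h
    exact this
  · intro ω hω
    simp only [mem_filter, mem_univ, true_and] at hω
    obtain ⟨h1, h2⟩ := hω
    have hiff : ∀ x, ω x ∈ U ↔ x ∈ U := by
      intro x
      refine ⟨fun h => ?_, h2 x⟩
      have := h2 _ h
      rwa [(h1 x).1] at this
    refine ⟨(ω.subtypePerm hiff, ω.subtypePerm (p := fun x => x ∉ U) (fun x => not_congr (hiff x))),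
      ?_, ?_⟩
    · simp only [mem_product, mem_filter, mem_univ, true_and]
      constructor
      · intro a
        exact ⟨Subtype.ext (h1 a).1, fun h => (h1 a).2 (congrArg Subtype.val h)⟩
      · intro a
        exact ⟨Subtype.ext (h1 a).1, fun h => (h1 a).2 (congrArg Subtype.val h)⟩
    · ext a
      by_cases ha : a ∈ U
      · rw [Perm.subtypeCongr.left_apply _ _ ha]; rfl
      · rw [Perm.subtypeCongr.right_apply _ _ ha]; rfl

end counting

section blocks
variable {X V : Type*} [Fintype X] [DecidableEq X] [Fintype V] [DecidableEq V]

/-- block structure -/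
structure Blk (β : X → V) (ρ : Perm X) : Prop where
  three : ∀ x, ρ (ρ (ρ x)) = x
  ne : ∀ x, ρ x ≠ x
  blk : ∀ x, β (ρ x) = β x
  fib : ∀ x y, β x = β y → y = x ∨ y = ρ x ∨ y = ρ (ρ x)
  card : ∀ v, #{x | β x = v} = 3

/-- union of blocks -/
def full (β : X → V) (J : Finset V) : Finset X := {x | β x ∈ J}

@[simp] lemma mem_full {β : X → V} {J : Finset V} {x : X} : x ∈ full β J ↔ β x ∈ J := by
  simp [full]

/-- parametrisation of the relevant sets -/
def par (β : X → V) (ρ : Perm X) : Finset V × Option (X × Bool) → Finset X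
  | (J, none) => full β J
  | (J, some (b, false)) => insert b (full β J)
  | (J, some (b, true)) => insert (ρ b) (insert (ρ (ρ b)) (full β J))

/-- validity of the parameters -/
def val (β : X → V) : Finset V × Option (X × Bool) → Prop
  | (_, none) => True
  | (J, some (b, _)) => β b ∉ J

lemma par_J {β : X → V} {ρ : Perm X} (h : Blk β ρ) (p : Finset V × Option (X × Bool))
    (hp : val β p) (v : V) : v ∈ p.1 ↔ ∀ x, β x = v → x ∈ par β ρ p := by
  obtain ⟨J, o⟩ := p
  have hne : ∃ x, β x = v := by
    have := h.card v
    have h2 : (#{x | β x = v}) ≠ 0 := by omega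
    obtain ⟨x, hx⟩ := Finset.card_ne_zero.mp h2
    exact ⟨x, by simpa using hx⟩
  obtain ⟨y, hy⟩ := hne
  constructor
  · intro hv x hx
    have : x ∈ full β J := by simp only [mem_full]; rw [hx]; exact hv
    rcases o with _ | ⟨b, _ | _⟩ <;> simp only [par, mem_insert, this, or_true]
  · intro hv
    by_contra hJ
    simp only at hJ
    rcases o with _ | ⟨b, _ | _⟩
    · have := hv y hy
      simp only [par, mem_full, hy] at this
      exact hJ this
    · simp only [par, mem_insert, mem_full] at hv
      by_cases hb : β b = v
      · rcases hv (ρ b) (by rw [h.blk, hb]) with h1 | h1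
        · exact h.ne _ h1
        · rw [h.blk, hb] at h1; exact hJ h1
      · rcases hv y hy with h1 | h1
        · rw [h1] at hy; exact hb hy
        · rw [hy] at h1; exact hJ h1
    · simp only [par, mem_insert, mem_full] at hv
      by_cases hb : β b = v
      · rcases hv b hb with h1 | h1 | h1
        · exact h.ne _ h1.symm
        · have := congrArg ρ h1
          rw [h.three] at this
          exact h.ne _ this
        · rw [hb] at h1; exact hJ h1
      · rcases hv y hy with h1 | h1 | h1
        · rw [h1, h.blk] at hy; exact hb hy
        · rw [h1, h.blk, h.blk] at hy; exact hb hy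
        · rw [hy] at h1; exact hJ h1

lemma par_inj {β : X → V} {ρ : Perm X} (h : Blk β ρ) (p q : Finset V × Option (X × Bool))
    (hp : val β p) (hq : val β q) (he : par β ρ p = par β ρ q) : p = q := by
  have hJ : p.1 = q.1 := by
    ext v
    rw [par_J h p hp, par_J h q hq, he]
  obtain ⟨J, o⟩ := p
  obtain ⟨J', o'⟩ := q
  simp only at hJ
  subst hJ
  congr 1
  have e : ∀ x, x ∈ par β ρ (J, o) ↔ x ∈ par β ρ (J, o') := fun x => by rw [he]
  have n1 := h.ne
  have n2 : ∀ x, ρ (ρ x) ≠ x := by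
    intro x hx
    have := h.three x
    rw [hx] at this
    exact h.ne _ this
  have inj : ∀ x y, ρ x = ρ y → x = y := fun x y hxy => ρ.injective hxy
  have h3 := h.three
  have hb := h.blk
  rcases o with _ | ⟨b, _ | _⟩ <;> rcases o' with _ | ⟨b', _ | _⟩ <;>
    simp only [par, val, mem_insert, mem_full] at e hp hq
  · rfl
  · have := e b'; grind
  · have := e (ρ b'); grind
  · have := e b; grind
  · have := e b; grind
  · have := e (ρ b'); have := e (ρ (ρ b')); grind
  · have := e (ρ b); grind
  · have := e (ρ b); have := e (ρ (ρ b)); grind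
  · have := e (ρ b); have := e (ρ (ρ b)); grind

lemma par_surj {β : X → V} {ρ : Perm X} (h : Blk β ρ) (S : Finset X)
    (hS : ∀ a b, a ∈ S → b ∈ S → ρ.symm a ∉ S → ρ.symm b ∉ S → a = b) :
    ∃ p, val β p ∧ par β ρ p = S := by
  have hs : ∀ x, ρ.symm x = ρ (ρ x) := by
    intro x; rw [Equiv.symm_apply_eq, h.three]
  simp only [hs] at hS
  have h3 := h.three
  have hb := h.blk
  have hfib := h.fib
  set J : Finset V := {v | ∀ x, β x = v → x ∈ S} with hJ
  have mJ : ∀ v, v ∈ J ↔ ∀ x, β x = v → x ∈ S := by intro v; simp [hJ]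
  by_cases ha : ∃ a ∈ S, ρ (ρ a) ∉ S
  · obtain ⟨a, ha, ha'⟩ := ha
    have hfull : ∀ x ∈ S, β x ≠ β a → β x ∈ J := by
      intro x hx hxa
      have key : ∀ y ∈ S, β y ≠ β a → ρ (ρ y) ∈ S := by
        intro y hy hya
        by_contra hc
        exact hya (congrArg β (hS y a hy ha hc ha'))
      have h1 := key x hx hxa
      have h2 := key _ h1 (by rw [hb, hb]; exact hxa)
      rw [h3] at h2
      rw [mJ]
      intro y hy
      rcases hfib x y hy.symm with rfl | rfl | rfl <;> assumption
    have haJ : β a ∉ J := by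
      rw [mJ]
      intro hc
      exact ha' (hc _ (by rw [hb, hb]))
    have hJS : ∀ x, β x ∈ J → x ∈ S := fun x hx => (mJ _).mp hx x rfl
    by_cases h2 : ρ a ∈ S
    · refine ⟨(J, some (ρ (ρ a), true)), ?_, ?_⟩
      · simp only [val, hb]; exact haJ
      · ext x
        simp only [par, mem_insert, mem_full, h3]
        constructor
        · rintro (rfl | rfl | hx)
          · exact ha
          · exact h2
          · exact hJS x hx
        · intro hx
          by_cases hxa : β x = β a
          · rcases hfib a x hxa.symm with rfl | rfl | rfl
            · simp
            · simp
            · exact absurd hx ha'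
          · right; right; exact hfull x hx hxa
    · refine ⟨(J, some (a, false)), haJ, ?_⟩
      ext x
      simp only [par, mem_insert, mem_full]
      constructor
      · rintro (rfl | hx)
        · exact ha
        · exact hJS x hx
      · intro hx
        by_cases hxa : β x = β a
        · rcases hfib a x hxa.symm with rfl | rfl | rfl
          · simp
          · exact absurd hx h2
          · exact absurd hx ha'
        · right; exact hfull x hx hxa
  · push Not at ha
    refine ⟨(J, none), trivial, ?_⟩
    ext x
    simp only [par, mem_full, mJ]
    constructor
    · intro hx; exact hx x rfl
    · intro hx y hy
      have h1 := ha x hx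
      have h2 := ha _ h1
      rw [h3] at h2
      rcases hfib x y hy.symm with rfl | rfl | rfl <;> assumption

lemma sum_par {β : X → V} {ρ : Perm X} (h : Blk β ρ) (f : Finset X → ℤ)
    (hf : ∀ S a b, a ≠ b → a ∈ S → b ∈ S → ρ.symm a ∉ S → ρ.symm b ∉ S → f S = 0) :
    ∑ S, f S = ∑ J : Finset V, (f (full β J) + ∑ b : X with β b ∉ J,
      (f (insert b (full β J)) + f (insert (ρ b) (insert (ρ (ρ b)) (full β J))))) := by
  classical
  have h1 : ∑ p : Finset V × Option (X × Bool) with val β p, f (par β ρ p) = ∑ S, f S := by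
    apply Finset.sum_of_injOn (par β ρ)
    · intro p hp q hq hpq
      exact par_inj h p q (by simpa using hp) (by simpa using hq) hpq
    · intro p _; simp
    · intro S _ hS
      by_contra hc
      apply hS
      obtain ⟨p, hp, hp'⟩ := par_surj h S (by
        intro a b ha hb ha' hb'
        by_contra hab
        exact hc (hf S a b hab ha hb ha' hb'))
      exact ⟨p, by simpa using hp, hp'⟩
    · intro p _; rfl
  rw [← h1, Finset.sum_filter, Fintype.sum_prod_type]
  apply Finset.sum_congr rfl
  intro J _
  rw [Fintype.sum_option, Fintype.sum_prod_type, Finset.sum_filter]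
  congr 1
  · simp [val, par]
  · apply Finset.sum_congr rfl
    intro b _
    rw [Fintype.sum_bool]
    by_cases hb : β b ∈ J
    · simp [val, par, hb]
    · simp [val, par, hb, add_comm]

lemma card_full {β : X → V} {ρ : Perm X} (h : Blk β ρ) (J : Finset V) :
    #(full β J) = 3 * #J := by
  rw [Finset.card_eq_sum_card_fiberwise (f := β) (t := J)]
  · rw [Finset.sum_congr rfl (g := fun _ => 3), Finset.sum_const, smul_eq_mul, mul_comm]
    intro v hv
    rw [← h.card v]
    congr 1
    ext x
    simp only [mem_filter, mem_full, mem_univ, true_and, and_iff_right_iff_imp]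
    rintro rfl; exact hv
  · intro x hx; simpa using hx

lemma main_sum [Nonempty X] {β : X → V} {ρ : Perm X} (h : Blk β ρ) :
    (Fintype.card X : ℤ) * #{ω : Perm X | IsM ω ∧ ∀ a b, (ω * ρ).SameCycle a b} =
    ∑ J : Finset V, ((Fintype.card X - 3 * #J : ℕ) : ℤ) *
      ((-1) ^ (#J + 1) * (-1) ^ ((3 * #J + 1) / 2) *
        ((nm (3 * #J + 1) * nm (Fintype.card X - (3 * #J + 1)) : ℕ) : ℤ)) := by
  set n := Fintype.card X with hn
  have e1 : (n : ℤ) * #{ω : Perm X | IsM ω ∧ ∀ a b, (ω * ρ).SameCycle a b} =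
      ∑ S : Finset X, ((n : ℤ) - #S) * ((-1) ^ #S * AS ρ S) := by
    unfold AS
    simp_rw [Finset.mul_sum]
    rw [Finset.sum_comm]
    simp_rw [hn]
    rw [Finset.sum_congr rfl (fun ω _ => card_mul_ind (ω * ρ)), ← Finset.sum_filter,
      Finset.filter_filter, Finset.sum_const, nsmul_eq_mul, mul_comm]
  rw [e1, sum_par h]
  swap
  · intro S a b hab ha hb ha' hb'
    rw [AS_zero ρ S a b hab ha hb ha' hb']; simp
  apply Finset.sum_congr rfl
  intro J _
  have hF := card_full h J
  have hle : #(full β J) ≤ n := Finset.card_le_univ _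
  set F := full β J with hFdef
  have hρF : ∀ i ∈ F, ρ i ∈ F := by
    intro i hi
    rw [hFdef, mem_full] at hi ⊢
    rwa [h.blk]
  have hρF' : ∀ i, ρ i ∈ F → i ∈ F := by
    intro i hi
    rw [hFdef, mem_full] at hi ⊢
    rwa [h.blk] at hi
  have himg : F.image ρ = F := by
    apply Finset.eq_of_subset_of_card_le
    · intro x hx
      obtain ⟨y, hy, rfl⟩ := Finset.mem_image.mp hx
      exact hρF y hy
    · rw [Finset.card_image_of_injective _ ρ.injective]
  obtain ⟨r, hr⟩ := exists_restrict ρ F hρF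
  have hsr := sign_restrict_three ρ h.three F hρF r hr
  have hcard : #{b : X | β b ∉ J} = n - 3 * #J := by
    have : ({b : X | β b ∉ J} : Finset X) = Fᶜ := by ext; simp [hFdef]
    rw [this, Finset.card_compl, hF]
  have n2 : ∀ x, ρ (ρ x) ≠ x := by
    intro x hx
    have := h.three x
    rw [hx] at this
    exact h.ne _ this
  have t0 := AS_type0 ρ h.three F hρF
  have t1 : ∀ b, β b ∉ J → ((n : ℤ) - #(insert b F)) * ((-1) ^ #(insert b F) * AS ρ (insert b F)) =
      - ((-1) ^ (#F) * ((-1) ^ (#F / 2) * c0 F)) := by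
    intro b hb
    have hbF : b ∉ F := by simpa [hFdef] using hb
    have hbF' : ρ b ∉ F := fun h => hbF (hρF' b h)
    have := AS_type1 ρ F (insert b F) b (ρ b) r hbF hbF' (h.ne b).symm rfl
      (by rw [Finset.image_insert, himg])
      (by intro i hi
          rw [hr i, if_neg (fun h => hi (Finset.mem_insert_of_mem h))])
      (by intro i hi hi'
          rw [hr i, if_pos (hρF' i hi')])
      (by intro i hi hi'
          have := ρ.injective hi'
          subst this
          rw [hr, if_neg hbF])
    rw [this, hsr, Finset.card_insert_of_notMem hbF, ← c1_mul F (ρ b) b hbF' hbF (h.ne b).symm]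
    have hlt : #F + 1 ≤ n := by
      rw [← Finset.card_insert_of_notMem hbF]; exact Finset.card_le_univ _
    have : ((n - #F - 1 : ℕ) : ℤ) = (n : ℤ) - (#F + 1 : ℕ) := by
      rw [Nat.sub_sub, Nat.cast_sub hlt]
    rw [Nat.cast_mul, ← hn, this, pow_succ]
    push_cast
    ring
  have t2 : ∀ b, β b ∉ J → ((n : ℤ) - #(insert (ρ b) (insert (ρ (ρ b)) F))) *
      ((-1) ^ #(insert (ρ b) (insert (ρ (ρ b)) F)) * AS ρ (insert (ρ b) (insert (ρ (ρ b)) F))) =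
      ((-1) ^ (#J + 1) * (-1) ^ ((3 * #J + 1) / 2) *
        ((nm (3 * #J + 1) * nm (n - (3 * #J + 1)) : ℕ) : ℤ)) := by
    intro b hb
    have hbF : b ∉ F := by simpa [hFdef] using hb
    have hbF' : ρ b ∉ F := fun h => hbF (hρF' b h)
    have hbF'' : ρ (ρ b) ∉ F := fun h => hbF' (hρF' _ h)
    set U := insert (ρ (ρ b)) F with hU
    have hUc : #U = 3 * #J + 1 := by rw [hU, Finset.card_insert_of_notMem hbF'', hF]
    have ha : ρ b ∉ U := by
      rw [hU, Finset.mem_insert, not_or]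
      exact ⟨(h.ne _).symm, hbF'⟩
    have hb' : b ∉ U := by
      rw [hU, Finset.mem_insert, not_or]
      exact ⟨(n2 _).symm, hbF⟩
    have := AS_type1 ρ U (insert (ρ b) U) (ρ b) b (r * swap (ρ b) (ρ (ρ b))) ha hb' (h.ne b) rfl
      (by rw [hU, Finset.image_insert, Finset.image_insert, himg, h.three, Finset.insert_comm])
      (by intro i hi
          rw [hU, Finset.mem_insert, Finset.mem_insert, not_or, not_or] at hi
          rw [Perm.mul_apply, swap_apply_of_ne_of_ne hi.1 hi.2.1, hr, if_neg hi.2.2])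
      (by intro i hi hi'
          rw [hU, Finset.mem_insert] at hi'
          rcases hi' with hi' | hi'
          · have := ρ.injective hi'
            rw [this, Perm.mul_apply, swap_apply_left, hr, if_neg hbF'']
          · have hiF := hρF' i hi'
            rw [Perm.mul_apply, swap_apply_of_ne_of_ne, hr, if_pos hiF]
            · rintro rfl; exact hbF' hiF
            · rintro rfl; exact hbF'' hiF)
      (by intro i hi hi'
          have : i = ρ (ρ b) := ρ.injective (by rw [hi', h.three])
          rw [this, Perm.mul_apply, swap_apply_right, hr, if_neg hbF'])
    rw [this, map_mul, hsr, sign_swap (h.ne _).symm, Finset.card_insert_of_notMem ha, ← hUc, hn,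
      ← c0_eq U, ← c1_mul U b (ρ b) hb' ha (h.ne b), ← hn]
    have hlt : #U + 1 ≤ n := by
      rw [← Finset.card_insert_of_notMem ha]; exact Finset.card_le_univ _
    have : ((n - #U - 1 : ℕ) : ℤ) = (n : ℤ) - (#U + 1 : ℕ) := by
      rw [Nat.sub_sub, Nat.cast_sub hlt]
    rw [Nat.cast_mul, this]
    have hs : (-1 : ℤ) ^ (#U + 1) = (-1) ^ #J := by
      rw [hUc]
      have : 3 * #J + 1 + 1 = #J + 2 * (#J + 1) := by ring
      rw [this, pow_add, pow_mul]; simp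
    rw [hs, pow_succ]
    push_cast
    ring
  rw [Finset.sum_add_distrib, Finset.sum_congr rfl (fun b hb => t1 b (by simpa using hb)),
    Finset.sum_congr rfl (fun b hb => t2 b (by simpa using hb)), Finset.sum_const, Finset.sum_const,
    hcard, t0, hF, nsmul_eq_mul, nsmul_eq_mul, Nat.cast_sub (by omega)]
  ring

lemma main_sum' [Nonempty X] {β : X → V} {ρ : Perm X} (h : Blk β ρ) (hX : Fintype.card X = 3 * Fintype.card V) :
    (Fintype.card X : ℤ) * #{ω : Perm X | IsM ω ∧ ∀ a b, (ω * ρ).SameCycle a b} =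
    ∑ j ∈ range (Fintype.card V + 1), ((Fintype.card V).choose j : ℤ) * (((3 * (Fintype.card V - j) : ℕ) : ℤ) *
      ((-1) ^ (j + 1) * (-1) ^ ((3 * j + 1) / 2) *
        ((nm (3 * j + 1) * nm (3 * Fintype.card V - (3 * j + 1)) : ℕ) : ℤ))) := by
  rw [main_sum h, ← Finset.powerset_univ, hX]
  rw [Finset.sum_powerset_apply_card (fun j => (((3 * Fintype.card V - 3 * j : ℕ) : ℤ) *
      ((-1) ^ (j + 1) * (-1) ^ ((3 * j + 1) / 2) *
        ((nm (3 * j + 1) * nm (3 * Fintype.card V - (3 * j + 1)) : ℕ) : ℤ))))]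
  rw [Finset.card_univ]
  apply Finset.sum_congr rfl
  intro j _
  rw [nsmul_eq_mul, Nat.mul_sub]

end blocks
end OV

namespace OV

open Equiv Equiv.Perm Finset
open scoped Nat

/-- `(6q+1)!!/(2q)!` -/
noncomputable def vv (q : ℕ) : ℝ := ((6 * q + 1)‼ : ℝ) / ((2 * q)! : ℝ)

lemma vv_zero : vv 0 = 1 := by simp [vv]

lemma vv_pos (q : ℕ) : 0 < vv q := by
  unfold vv
  have := Nat.doubleFactorial_pos (6 * q + 1)
  positivity

lemma vv_succ (q : ℕ) : vv (q + 1) = vv q * (3 * (6 * q + 5) * (6 * q + 7) / (2 * (q + 1))) := by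
  unfold vv
  have h1 : (6 * (q + 1) + 1)‼ = (6 * q + 7) * ((6 * q + 5) * ((6 * q + 3) * (6 * q + 1)‼)) := by
    have : 6 * (q + 1) + 1 = (((6 * q + 1) + 2) + 2) + 2 := by ring
    rw [this, Nat.doubleFactorial_add_two, Nat.doubleFactorial_add_two, Nat.doubleFactorial_add_two]
  have h2 : (2 * (q + 1))! = (2 * q + 2) * ((2 * q + 1) * (2 * q)!) := by
    have : 2 * (q + 1) = ((2 * q) + 1) + 1 := by ring
    rw [this, Nat.factorial_succ, Nat.factorial_succ]
  rw [h1, h2]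
  have := Nat.factorial_pos (2 * q)
  push_cast
  field_simp
  ring

lemma uu_eq (p : ℕ) : ((6 * p + 3)‼ : ℝ) / ((2 * p + 1)! : ℝ) = 3 * vv p := by
  have h1 : (6 * p + 3)‼ = (6 * p + 3) * (6 * p + 1)‼ := Nat.doubleFactorial_add_two _
  unfold vv
  rw [h1, Nat.factorial_succ]
  have := Nat.factorial_pos (2 * p)
  push_cast
  field_simp
  ring

lemma vv_super (p q : ℕ) : (vv p / (p ! : ℝ)) * (vv q / (q ! : ℝ)) ≤ vv (p + q) / ((p + q)! : ℝ) := by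
  induction p with
  | zero => simp [vv_zero]
  | succ p ih =>
    have e : ∀ k : ℕ, vv (k + 1) / ((k + 1)! : ℝ) = (54 - 3 / (2 * ((k : ℝ) + 1) ^ 2)) * (vv k / (k ! : ℝ)) := by
      intro k
      rw [vv_succ, Nat.factorial_succ]
      have := Nat.factorial_pos k
      push_cast
      field_simp
      ring
    rw [e p, show p + 1 + q = (p + q) + 1 by ring, e (p + q), mul_assoc]
    have h1 : (54 : ℝ) - 3 / (2 * ((p : ℝ) + 1) ^ 2) ≤ 54 - 3 / (2 * (((p + q : ℕ) : ℝ) + 1) ^ 2) := by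
      gcongr
      omega
    have h0 : (0 : ℝ) ≤ 54 - 3 / (2 * ((p : ℝ) + 1) ^ 2) := by
      have : 3 / (2 * ((p : ℝ) + 1) ^ 2) ≤ 3 := by
        apply div_le_self (by norm_num)
        have : (0 : ℝ) ≤ p := by positivity
        nlinarith
      linarith
    have h2 := vv_pos p
    have h3 := vv_pos q
    apply mul_le_mul h1 ih (by positivity) (h0.trans h1)

lemma vv_bound (K p : ℕ) (hp : p ≤ K) : vv p * vv (K - p) / vv K ≤ 1 / (K.choose p : ℝ) := by
  obtain ⟨q, rfl⟩ := Nat.exists_eq_add_of_le hp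
  rw [Nat.add_sub_cancel_left]
  have h := vv_super p q
  have hc : (((p + q).choose p : ℕ) : ℝ) * (p ! * q !) = ((p + q)! : ℝ) := by
    rw [← Nat.choose_mul_factorial_mul_factorial (Nat.le_add_right p q), Nat.add_sub_cancel_left]
    push_cast; ring
  have hcp : (0 : ℝ) < ((p + q).choose p : ℕ) := by
    exact_mod_cast Nat.choose_pos (by omega)
  have h1 : (0 : ℝ) < (p ! : ℝ) := by positivity
  have h2 : (0 : ℝ) < (q ! : ℝ) := by positivity
  rw [← hc] at h
  have hv := vv_pos (p + q)
  rw [div_le_div_iff₀ hv hcp]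
  rw [div_mul_div_comm, div_le_div_iff₀ (by positivity) (by positivity)] at h
  have h3 : (0 : ℝ) < p ! * q ! := by positivity
  nlinarith

lemma choose_ge (a b : ℕ) : (a + b + 4).choose 2 ≤ (a + b + 4).choose (a + 2) := by
  induction a generalizing b with
  | zero => simp
  | succ a iha =>
    induction b with
    | zero =>
      rw [← Nat.choose_symm (k := 2) (by omega)]
      apply le_of_eq; congr 1
    | succ b ihb =>
      have h1 := iha (b + 1)
      have h2 : (a + 1 + (b + 1) + 4).choose (a + 1 + 2) =
          (a + b + 5).choose (a + 2) + (a + b + 5).choose (a + 3) := by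
        rw [show a + 1 + (b + 1) + 4 = (a + b + 5) + 1 by ring, show a + 1 + 2 = (a + 2) + 1 by ring,
          Nat.choose_succ_succ]
      have h3 : (a + 1 + (b + 1) + 4).choose 2 = (a + b + 5) + (a + b + 5).choose 2 := by
        rw [show a + 1 + (b + 1) + 4 = (a + b + 5) + 1 by ring, Nat.choose_succ_succ' _ 1]
        simp
      have h4 : a + b + 5 ≤ (a + b + 5).choose 2 := by
        rw [Nat.choose_two_right, Nat.le_div_iff_mul_le (by norm_num)]
        apply Nat.mul_le_mul_left; omega
      rw [show a + (b + 1) + 4 = a + b + 5 by ring] at h1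
      rw [show a + 1 + b + 4 = a + b + 5 by ring, show a + 1 + 2 = a + 3 by ring] at ihb
      omega

/-- normalised alternating sum -/
noncomputable def RR (K : ℕ) : ℝ := ∑ p ∈ range (K + 1), (-1) ^ p * (vv p * vv (K - p) / vv K)

lemma RR_bound (K : ℕ) (hK : 4 ≤ K) (he : Even K) : |RR K - 2| ≤ 4 / K := by
  obtain ⟨M, rfl⟩ : ∃ M, K = M + 3 + 1 := ⟨K - 4, by omega⟩
  have hv := (vv_pos (M + 3 + 1)).ne'
  have e : RR (M + 3 + 1) - 2 = ∑ p ∈ range (M + 3),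
      (-1) ^ (p + 1) * (vv (p + 1) * vv (M + 3 + 1 - (p + 1)) / vv (M + 3 + 1)) := by
    unfold RR
    rw [Finset.sum_range_succ, Finset.sum_range_succ', he.neg_one_pow]
    simp only [Nat.sub_self, vv_zero, Nat.sub_zero]
    field_simp
    ring
  rw [e]
  refine (Finset.abs_sum_le_sum_abs _ _).trans ?_
  have hb : ∀ p ∈ range (M + 3), |(-1 : ℝ) ^ (p + 1) * (vv (p + 1) * vv (M + 3 + 1 - (p + 1)) / vv (M + 3 + 1))|
      ≤ 1 / ((M + 4).choose (p + 1) : ℝ) := by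
    intro p hp
    have hp := Finset.mem_range.mp hp
    rw [abs_mul, abs_pow, abs_neg, abs_one, one_pow, one_mul, abs_of_nonneg]
    · exact vv_bound (M + 4) (p + 1) (by omega)
    · have := vv_pos (p + 1); have := vv_pos (M + 3 + 1 - (p + 1)); have := vv_pos (M + 3 + 1)
      positivity
  refine (Finset.sum_le_sum hb).trans ?_
  rw [Finset.sum_range_succ, Finset.sum_range_succ']
  have hmid : ∑ k ∈ range (M + 1), 1 / (((M + 4).choose (k + 1 + 1) : ℕ) : ℝ) ≤
      ∑ k ∈ range (M + 1), 2 / (((M : ℝ) + 4) * ((M : ℝ) + 3)) := by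
    apply Finset.sum_le_sum
    intro k hk
    have hk := Finset.mem_range.mp hk
    have h1 := choose_ge k (M - k)
    rw [show k + (M - k) + 4 = M + 4 by omega] at h1
    have h2 : (((M + 4).choose 2 : ℕ) : ℝ) = ((M : ℝ) + 4) * ((M : ℝ) + 3) / 2 := by
      rw [Nat.cast_choose_two]; push_cast; ring
    have h3 : ((M : ℝ) + 4) * ((M : ℝ) + 3) / 2 ≤ (((M + 4).choose (k + 1 + 1) : ℕ) : ℝ) := by
      rw [← h2]; exact_mod_cast h1
    have h4 : (2 : ℝ) / (((M : ℝ) + 4) * ((M : ℝ) + 3)) = 1 / (((M : ℝ) + 4) * ((M : ℝ) + 3) / 2) := by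
      field_simp
    rw [h4]
    exact one_div_le_one_div_of_le (by positivity) h3
  rw [Finset.sum_const, card_range, nsmul_eq_mul] at hmid
  have e1 : (M + 4).choose (0 + 1) = M + 4 := by simp
  have e2 : (M + 4).choose (M + 2 + 1) = M + 4 := by
    rw [show M + 4 = (M + 3) + 1 by ring, show M + 2 + 1 = M + 3 by ring]
    exact Nat.choose_succ_self_right (M + 3)
  rw [e1, e2]
  have hlast : ((M + 1 : ℕ) : ℝ) * (2 / (((M : ℝ) + 4) * ((M : ℝ) + 3))) ≤ 2 / ((M : ℝ) + 4) := by
    rw [mul_div_assoc', div_le_div_iff₀ (by positivity) (by positivity)]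
    push_cast
    have : (0 : ℝ) ≤ M := by positivity
    nlinarith
  push_cast at hmid hlast ⊢
  have e3 : (4 : ℝ) / (M + 3 + 1) = 2 / (M + 4) + 1 / (M + 4) + 1 / (M + 4) := by
    field_simp; ring
  rw [e3]
  linarith

lemma RR_tendsto : Tendsto (fun g : ℕ => RR (2 * g)) atTop (𝓝 2) := by
  rw [tendsto_iff_norm_sub_tendsto_zero]
  have h : Tendsto (fun g : ℕ => (4 : ℝ) / ((2 * g : ℕ) : ℝ)) atTop (𝓝 0) := by
    apply Tendsto.div_atTop tendsto_const_nhds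
    apply tendsto_natCast_atTop_atTop.comp
    exact tendsto_id.const_mul_atTop' (by norm_num)
  refine squeeze_zero' (Eventually.of_forall fun _ => norm_nonneg _) ?_ h
  filter_upwards [eventually_ge_atTop 2] with g hg
  exact RR_bound (2 * g) (by omega) (by simp)

lemma sum_pairs (f : ℕ → ℤ) (L : ℕ) :
    ∑ j ∈ range (2 * L), f j = ∑ p ∈ range L, (f (2 * p) + f (2 * p + 1)) := by
  induction L with
  | zero => simp
  | succ L ih =>
    rw [show 2 * (L + 1) = 2 * L + 1 + 1 by ring, Finset.sum_range_succ, Finset.sum_range_succ, ih,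
      Finset.sum_range_succ]
    ring

lemma count_formula {X V : Type*} [Fintype X] [DecidableEq X] [Fintype V] [DecidableEq V]
    [Nonempty X] {β : X → V} {ρ : Perm X} (h : Blk β ρ) (K : ℕ) (hV : Fintype.card V = 2 * (K + 1))
    (hX : Fintype.card X = 3 * Fintype.card V) :
    (#{ω : Perm X | IsM ω ∧ ∀ a b, (ω * ρ).SameCycle a b} : ℝ) = (6 * K + 3)‼ * RR K := by
  have h1 := main_sum' h hX
  rw [hX, hV, Finset.sum_range_succ, sum_pairs] at h1
  have hodd : ∀ p, nm (3 * (2 * p) + 1) = 0 := by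
    intro p
    unfold nm
    rw [if_neg]
    rw [Nat.not_even_iff]
    omega
  have hcast := congrArg (fun z : ℤ => (z : ℝ)) h1
  simp only [hodd, zero_mul, Nat.cast_zero, mul_zero, add_zero, zero_add] at hcast
  have hterm : ∀ p ∈ range (K + 1),
      (((((2 * (K + 1)).choose (2 * p + 1) : ℕ) : ℤ) * (((3 * (2 * (K + 1) - (2 * p + 1)) : ℕ) : ℤ) *
      ((-1) ^ (2 * p + 1 + 1) * (-1) ^ ((3 * (2 * p + 1) + 1) / 2) *
        ((nm (3 * (2 * p + 1) + 1) * nm (3 * (2 * (K + 1)) - (3 * (2 * p + 1) + 1)) : ℕ) : ℤ))) : ℤ) : ℝ)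
      = (9 * ((2 * (K + 1))! : ℝ) * vv K) * ((-1) ^ p * (vv p * vv (K - p) / vv K)) := by
    intro p hp
    have hp := Finset.mem_range.mp hp
    obtain ⟨q, rfl⟩ := Nat.exists_eq_add_of_le (Nat.lt_succ_iff.mp hp)
    have n1 : nm (3 * (2 * p + 1) + 1) = (6 * p + 3)‼ := by
      unfold nm
      rw [if_pos (by rw [Nat.even_iff]; omega)]
      congr 1; omega
    have n2 : nm (3 * (2 * (p + q + 1)) - (3 * (2 * p + 1) + 1)) = (6 * q + 1)‼ := by
      unfold nm
      rw [if_pos (by rw [Nat.even_iff]; omega)]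
      congr 1; omega
    have n3 : 2 * (p + q + 1) - (2 * p + 1) = 2 * q + 1 := by omega
    have n4 : (-1 : ℤ) ^ (2 * p + 1 + 1) = 1 := by
      rw [show 2 * p + 1 + 1 = 2 * (p + 1) by ring, pow_mul]; simp
    have n5 : (-1 : ℤ) ^ ((3 * (2 * p + 1) + 1) / 2) = (-1) ^ p := by
      rw [show (3 * (2 * p + 1) + 1) / 2 = p + 2 * (p + 1) by omega, pow_add, pow_mul]; simp
    rw [n1, n2, n3, n4, n5, Nat.add_sub_cancel_left]
    have hch : (((2 * (p + q + 1)).choose (2 * p + 1) : ℕ) : ℝ) * ((2 * p + 1)! * (2 * q + 1)!) =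
        ((2 * (p + q + 1))! : ℝ) := by
      rw [show 2 * (p + q + 1) = (2 * p + 1) + (2 * q + 1) by ring,
        ← Nat.choose_mul_factorial_mul_factorial (Nat.le_add_right (2 * p + 1) (2 * q + 1)),
        Nat.add_sub_cancel_left]
      push_cast; ring
    have hu := uu_eq p
    have hvq : vv q = ((6 * q + 1)‼ : ℝ) / ((2 * q)! : ℝ) := rfl
    have f1 : (0 : ℝ) < ((2 * p + 1)! : ℝ) := by positivity
    have f2 : (0 : ℝ) < ((2 * q)! : ℝ) := by positivity
    have f3 : ((2 * q + 1)! : ℝ) = (2 * q + 1) * ((2 * q)! : ℝ) := by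
      rw [Nat.factorial_succ]; push_cast; ring
    rw [div_eq_iff f1.ne'] at hu
    rw [eq_div_iff f2.ne'] at hvq
    have hvK := (vv_pos (p + q)).ne'
    rw [← hch, f3]
    push_cast
    rw [hu, ← hvq]
    field_simp
    ring
  push_cast at hcast hterm
  rw [Finset.sum_congr rfl hterm, ← Finset.mul_sum] at hcast
  have hR : ∑ p ∈ range (K + 1), (-1 : ℝ) ^ p * (vv p * vv (K - p) / vv K) = RR K := rfl
  rw [hR] at hcast
  have hu := uu_eq K
  have f1 : (0 : ℝ) < ((2 * K + 1)! : ℝ) := by positivity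
  rw [div_eq_iff f1.ne'] at hu
  have f2 : ((2 * (K + 1))! : ℝ) = (2 * K + 2) * ((2 * K + 1)! : ℝ) := by
    rw [show 2 * (K + 1) = (2 * K + 1) + 1 by ring, Nat.factorial_succ]; push_cast; ring
  rw [hu]
  rw [f2] at hcast
  have f3 : (6 * ((K : ℝ) + 1)) ≠ 0 := by positivity
  apply mul_left_cancel₀ f3
  linear_combination hcast

lemma stir : Tendsto (fun m : ℕ => (((2 * m - 1)‼ : ℕ) : ℝ) / (√2 * (2 * (m : ℝ) / Real.exp 1) ^ m))
    atTop (𝓝 1) := by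
  have h := Stirling.tendsto_stirlingSeq_sqrt_pi
  have h2 : Tendsto (fun m : ℕ => Stirling.stirlingSeq (2 * m)) atTop (𝓝 (√Real.pi)) :=
    h.comp (tendsto_id.const_mul_atTop' (by norm_num))
  have hpi : √Real.pi ≠ 0 := by positivity
  have h3 := h2.div h hpi
  rw [div_self hpi] at h3
  refine h3.congr' ?_
  filter_upwards [eventually_ge_atTop 1] with m hm
  have hm0 : (0 : ℝ) < m := by exact_mod_cast hm
  have hfd : (((2 * m)! : ℕ) : ℝ) = (((2 * m - 1)‼ : ℕ) : ℝ) * (2 ^ m * (m ! : ℝ)) := by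
    obtain ⟨k, rfl⟩ : ∃ k, m = k + 1 := ⟨m - 1, by omega⟩
    have e : 2 * (k + 1) = (2 * k + 1) + 1 := by ring
    have := Nat.factorial_eq_mul_doubleFactorial (2 * k + 1)
    rw [← e, Nat.doubleFactorial_two_mul] at this
    rw [this]
    have e2 : 2 * (k + 1) - 1 = 2 * k + 1 := by omega
    rw [e2]
    push_cast; ring
  simp only [Pi.div_apply, Stirling.stirlingSeq]
  rw [hfd]
  have hs : √(2 * ((2 * m : ℕ) : ℝ)) = √2 * √(2 * (m : ℝ)) := by
    rw [← Real.sqrt_mul (by norm_num)]; push_cast; rfl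
  rw [hs]
  have hs2 : √(2 * (m : ℝ)) ≠ 0 := by positivity
  have hs3 : √(2 : ℝ) ≠ 0 := by positivity
  have hf : (m ! : ℝ) ≠ 0 := by positivity
  have he : Real.exp 1 ≠ 0 := (Real.exp_pos 1).ne'
  push_cast
  rw [pow_mul', pow_two, div_pow (m : ℝ), div_pow (2 * (m : ℝ)), mul_pow]
  field_simp

lemma rho_blk (N : ℕ) : Blk (fun a : Fin (3 * N) => (⟨a.val / 3, by omega⟩ : Fin N)) (rho N) := by
  have hv : ∀ x : Fin (3 * N), (rho N x).val = 3 * (x.val / 3) + (x.val + 1) % 3 := fun x => rfl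
  refine ⟨?_, ?_, ?_, ?_, ?_⟩
  · intro x
    apply Fin.ext
    simp only [hv]; omega
  · intro x h
    have := congrArg Fin.val h
    simp only [hv] at this; omega
  · intro x
    apply Fin.ext
    simp only [hv]; omega
  · intro x y h
    have h := congrArg Fin.val h
    simp only at h
    simp only [Fin.ext_iff, hv]
    omega
  · intro v
    have : ({x : Fin (3 * N) | (⟨x.val / 3, by omega⟩ : Fin N) = v} : Finset (Fin (3 * N))) =
        {⟨3 * v.val, by omega⟩, ⟨3 * v.val + 1, by omega⟩, ⟨3 * v.val + 2, by omega⟩} := by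
      ext x
      simp only [mem_filter, mem_univ, true_and, mem_insert, mem_singleton, Fin.ext_iff]
      omega
    rw [this, Finset.card_eq_three]
    refine ⟨_, _, _, ?_, ?_, ?_, rfl⟩ <;> simp [Fin.ext_iff]

lemma card_eq (N : ℕ) : Nat.card {ω : Omega N // OneOrbit ω} =
    #{ω : Perm (Fin (3 * N)) | IsM ω ∧ ∀ a b, (ω * rho N).SameCycle a b} := by
  rw [← Fintype.card_subtype, ← Nat.card_eq_fintype_card]
  apply Nat.card_congr
  exact Equiv.subtypeSubtypeEquivSubtypeInter (fun ω : Perm (Fin (3 * N)) => IsM ω)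
    (fun ω => ∀ a b, (ω * rho N).SameCycle a b)

lemma main_seq : Tendsto
      (fun g : ℕ =>
        (Nat.card {ω : Omega (4 * g + 2) // OneOrbit ω} : ℝ) /
          (2 * Real.sqrt 2 / (3 * ((4 * g + 2 : ℕ) : ℝ)) *
            ((3 * ((4 * g + 2 : ℕ) : ℝ)) / Real.exp 1) ^ ((3 * ((4 * g + 2 : ℕ) : ℝ)) / 2)))
      atTop (𝓝 1) := by
  have hs : Tendsto (fun g : ℕ => 6 * g + 3) atTop atTop :=
    tendsto_atTop_mono (fun g => by simp only [id]; omega) tendsto_id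
  have h1 := stir.comp hs
  have h2 := RR_tendsto.div_const 2
  have h3 : Tendsto (fun g : ℕ => (12 * (g : ℝ) + 6) / (12 * (g : ℝ) + 5)) atTop (𝓝 1) := by
    have : Tendsto (fun g : ℕ => 1 + 1 / (12 * (g : ℝ) + 5)) atTop (𝓝 (1 + 0)) := by
      apply tendsto_const_nhds.add
      apply Tendsto.div_atTop tendsto_const_nhds
      apply tendsto_atTop_add_const_right
      exact tendsto_natCast_atTop_atTop.const_mul_atTop (by norm_num)
    rw [add_zero] at this
    refine this.congr (fun g => ?_)
    field_simp
    ring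
  have h4 := (h1.mul h2).mul h3
  rw [show (1 : ℝ) * (2 / 2) * 1 = 1 by norm_num] at h4
  refine h4.congr (fun g => ?_)
  have hne : Nonempty (Fin (3 * (4 * g + 2))) := ⟨⟨0, by omega⟩⟩
  have hc := count_formula (rho_blk (4 * g + 2)) (2 * g) (by simp; ring) (by simp)
  have hc' : (Nat.card {ω : Omega (4 * g + 2) // OneOrbit ω} : ℝ) =
      ((6 * (2 * g) + 3)‼ : ℝ) * RR (2 * g) := by
    rw [card_eq, ← hc]; congr!
  rw [hc']
  have hp : ((3 * ((4 * g + 2 : ℕ) : ℝ)) / Real.exp 1) ^ ((3 * ((4 * g + 2 : ℕ) : ℝ)) / 2) =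
      (2 * ((6 * g + 3 : ℕ) : ℝ) / Real.exp 1) ^ (6 * g + 3) := by
    rw [← Real.rpow_natCast]
    congr 1 <;> push_cast <;> ring
  rw [hp]
  have hd : (2 * (6 * g + 3) - 1)‼ = (12 * g + 5) * (6 * (2 * g) + 3)‼ := by
    rw [show 2 * (6 * g + 3) - 1 = (6 * (2 * g) + 3) + 2 by omega, Nat.doubleFactorial_add_two]
    congr 1; ring
  simp only [Function.comp_apply, hd]
  have hpos : (0 : ℝ) < (2 * ((6 * g + 3 : ℕ) : ℝ) / Real.exp 1) ^ (6 * g + 3) := by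
    have := Real.exp_pos 1
    positivity
  set P := (2 * ((6 * g + 3 : ℕ) : ℝ) / Real.exp 1) ^ (6 * g + 3) with hP
  have hs3 : √(2 : ℝ) ≠ 0 := by positivity
  push_cast
  field_simp
  ring

end OV

/-- Theorem (Petri, after Penner): the number of configurations giving a one-vertex
triangulated surface satisfies
`|{ω ∈ Ω_N : ω∘ρ has one orbit}| ∼ (2√2/(3N)) (3N/e)^{3N/2}` as `N → ∞`
through `N ≡ 2 (mod 4)`. -/
theorem one_vertex_configuration_count :
    Tendsto
      (fun N : ℕ =>
        (Nat.card {ω : Omega N // OneOrbit ω} : ℝ) /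
          (2 * Real.sqrt 2 / (3 * (N : ℝ)) *
            ((3 * (N : ℝ)) / Real.exp 1) ^ ((3 * (N : ℝ)) / 2)))
      (atTop ⊓ 𝓟 {N : ℕ | N % 4 = 2}) (𝓝 1) := by
  have hq : Tendsto (fun N : ℕ => N / 4) (atTop ⊓ 𝓟 {N : ℕ | N % 4 = 2}) atTop :=
    (Nat.tendsto_div_const_atTop (by norm_num)).mono_left inf_le_left
  refine (OV.main_seq.comp hq).congr' ?_
  have : ∀ᶠ N in (atTop ⊓ 𝓟 {N : ℕ | N % 4 = 2}), N ∈ {N : ℕ | N % 4 = 2} :=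
    Filter.mem_inf_of_right (Filter.mem_principal_self _)
  filter_upwards [this] with N hN
  have hN' : 4 * (N / 4) + 2 = N := by
    have : N % 4 = 2 := hN
    omega
  simp only [Function.comp_apply]
  rw [hN']
end
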